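/- arXiv:2508.16452 — 2 statements merged into one kernel-verified Lean document; each statement's English description precedes it below -/
import Mathlib

section
/- Let f be an increasing function ℕ → ℕ. There exists a finitely generated, torsion-free, 3-step solvable, conjugacy separable group G (a quotient of Hall's group) such that rf_G(n) ≥ f(n) for all sufficiently large n; moreover if f is computable then G can be taken to be recursively presented. -/
/-- Generators of Hall's group `G₀`: the shift `t`, and `a i`, `c i` for `i : ℤ`. -/
inductive Gen where
  | t : Gen
  | a : ℤ → Gen
  | c : ℤ → Gen

/-- The commutator convention of the paper: `[x, y] = x⁻¹y⁻¹xy`. -/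
def pcomm {G : Type*} [Group G] (x y : G) : G := x⁻¹ * y⁻¹ * x * y

/-- The relations of Hall's group `G₀`. -/
def hallRels : Set (FreeGroup Gen) :=
  (Set.range fun i : ℤ =>
    FreeGroup.of Gen.t * FreeGroup.of (Gen.a i) * (FreeGroup.of Gen.t)⁻¹ *
      (FreeGroup.of (Gen.a (i + 1)))⁻¹) ∪
  (Set.range fun i : ℤ =>
    FreeGroup.of Gen.t * FreeGroup.of (Gen.c i) * (FreeGroup.of Gen.t)⁻¹ *
      (FreeGroup.of (Gen.c i))⁻¹) ∪
  (Set.range fun p : ℤ × ℤ =>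
    pcomm (FreeGroup.of (Gen.a p.1)) (FreeGroup.of (Gen.a p.2)) *
      (FreeGroup.of (Gen.c (p.1 - p.2)))⁻¹) ∪
  (Set.range fun p : ℤ × ℤ =>
    pcomm (FreeGroup.of (Gen.c p.1)) (FreeGroup.of (Gen.a p.2))) ∪
  (Set.range fun p : ℤ × ℤ =>
    pcomm (FreeGroup.of (Gen.c p.1)) (FreeGroup.of (Gen.c p.2)))

/-- Hall's group `G₀`. -/
abbrev G₀ := PresentedGroup hallRels

/-- `g` has word norm at most `n` with respect to the generating set `S`. -/
def WordNormLe {G : Type*} [Group G] (S : Set G) (g : G) (n : ℕ) : Prop :=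
  ∃ L : List G, L.length ≤ n ∧ (∀ x ∈ L, x ∈ S ∨ x⁻¹ ∈ S) ∧ L.prod = g

/-- `G` is conjugacy separable: any two non-conjugate elements stay non-conjugate in
some finite quotient (`h g₁ h⁻¹` and `g₂` have the same image in `G ⧸ N` iff
`h g₁ h⁻¹ g₂⁻¹ ∈ N`). -/
def ConjSep (G : Type*) [Group G] : Prop :=
  ∀ g₁ g₂ : G, ¬ IsConj g₁ g₂ →
    ∃ N : Subgroup G, N.Normal ∧ N.FiniteIndex ∧ ∀ h : G, h * g₁ * h⁻¹ * g₂⁻¹ ∉ N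

/-- `G` is recursively presented: it is isomorphic to a group presented on finitely many
generators with a computably enumerable set of relations. -/
def RecursivelyPresented (G : Type*) [Group G] : Prop :=
  ∃ (k : ℕ) (L : ℕ → List (Fin k × Bool)), Computable L ∧
    Nonempty (G ≃* PresentedGroup (Set.range fun m => FreeGroup.mk (L m)))

/-- The conclusion of Statement 11 for the group `G`. -/
def GoodGroup (f : ℕ → ℕ) (G : Type) [Group G] : Prop :=
  ∃ (S : Finset G) (π : G₀ →* G),
    Function.Surjective π ∧
    Subgroup.closure (S : Set G) = ⊤ ∧
    (∀ g : G, g ≠ 1 → ¬ IsOfFinOrder g) ∧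
    derivedSeries G 3 = ⊥ ∧
    ConjSep G ∧
    (∃ N₁ : ℕ, ∀ n ≥ N₁, ∃ g : G, g ≠ 1 ∧ WordNormLe (S : Set G) g n ∧
      ∀ K : Subgroup G, K.Normal → K.FiniteIndex → g ∉ K → f n ≤ K.index)

/-- Data for a group extension `1 → A → N → V → 1` with bilinear cocycle `γ`, on which `T` acts
through the shifts `σ`. -/
structure HeisData (V A T : Type*) [AddCommGroup V] [AddCommGroup A] [AddCommGroup T] where
  /-- the action of `T` on `V` -/
  σ : T → V →+ V
  σ_zero : ∀ v, σ 0 v = v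
  σ_add : ∀ k l v, σ (k + l) v = σ k (σ l v)
  /-- the cocycle -/
  γ : V →+ V →+ A
  γ_σ : ∀ k v w, γ (σ k v) (σ k w) = γ v w

/-- The group `(V × A) ⋊ T` with `A` central, attached to `D`. -/
@[ext] structure Heis {V A T : Type*} [AddCommGroup V] [AddCommGroup A] [AddCommGroup T]
    (D : HeisData V A T) where
  /-- the component in `V` -/
  vec : V
  /-- the component in `A` -/
  cen : A
  /-- the component in `T` -/
  deg : T

namespace Heis

variable {V A T : Type*} [AddCommGroup V] [AddCommGroup A] [AddCommGroup T] {D : HeisData V A T}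

instance : Mul (Heis D) where
  mul g h := ⟨g.vec + D.σ g.deg h.vec, g.cen + h.cen + D.γ g.vec (D.σ g.deg h.vec),
    g.deg + h.deg⟩

instance : One (Heis D) where
  one := ⟨0, 0, 0⟩

instance : Inv (Heis D) where
  inv g := ⟨-D.σ (-g.deg) g.vec, -g.cen + D.γ g.vec g.vec, -g.deg⟩

@[simp] lemma vec_mul (g h : Heis D) : (g * h).vec = g.vec + D.σ g.deg h.vec := rfl
@[simp] lemma cen_mul (g h : Heis D) :
    (g * h).cen = g.cen + h.cen + D.γ g.vec (D.σ g.deg h.vec) := rfl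
@[simp] lemma deg_mul (g h : Heis D) : (g * h).deg = g.deg + h.deg := rfl
@[simp] lemma vec_one : (1 : Heis D).vec = 0 := rfl
@[simp] lemma cen_one : (1 : Heis D).cen = 0 := rfl
@[simp] lemma deg_one : (1 : Heis D).deg = 0 := rfl
@[simp] lemma vec_inv (g : Heis D) : g⁻¹.vec = -D.σ (-g.deg) g.vec := rfl
@[simp] lemma cen_inv (g : Heis D) : g⁻¹.cen = -g.cen + D.γ g.vec g.vec := rfl
@[simp] lemma deg_inv (g : Heis D) : g⁻¹.deg = -g.deg := rfl

instance : Group (Heis D) :=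
  Group.ofLeftAxioms
    (fun g h k => by
      ext
      · simp [D.σ_add, add_assoc]
      · simp only [cen_mul, vec_mul, deg_mul, map_add, D.σ_add, D.γ_σ, AddMonoidHom.add_apply]
        abel
      · simp [add_assoc])
    (fun g => by ext <;> simp [D.σ_zero])
    (fun g => by
      ext
      · simp
      · simp [D.γ_σ]
      · simp)

/-- The degree as a homomorphism. -/
def degHom (D : HeisData V A T) : Heis D →* Multiplicative T where
  toFun g := Multiplicative.ofAdd g.deg
  map_one' := rfl
  map_mul' _ _ := rfl

lemma deg_zpow (g : Heis D) (n : ℤ) : (g ^ n).deg = n • g.deg :=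
  congrArg Multiplicative.toAdd (map_zpow (degHom D) g n)

/-- The embedding of the central subgroup. -/
def ofCen (D : HeisData V A T) : Multiplicative A →* Heis D where
  toFun z := ⟨0, z.toAdd, 0⟩
  map_one' := rfl
  map_mul' x y := by ext <;> simp

lemma ofCen_injective : Function.Injective (ofCen D) := fun x y h => by
  simpa [ofCen] using congrArg Heis.cen h

lemma ofCen_comm (z : Multiplicative A) (g : Heis D) : ofCen D z * g = g * ofCen D z := by
  ext <;> simp [ofCen, D.σ_zero, add_comm]

lemma eq_ofCen {g : Heis D} (hv : g.vec = 0) (hk : g.deg = 0) :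
    g = ofCen D (Multiplicative.ofAdd g.cen) := by
  ext <;> simp [ofCen, hv, hk]

/-- Elements of degree zero and trivial central part. -/
def ofVec (D : HeisData V A T) (v : V) : Heis D := ⟨v, 0, 0⟩

/-- Elements with only a degree. -/
def ofDeg (D : HeisData V A T) : Multiplicative T →* Heis D where
  toFun k := ⟨0, 0, k.toAdd⟩
  map_one' := rfl
  map_mul' x y := by ext <;> simp

lemma ofDeg_conj_ofVec (k : T) (v : V) :
    ofDeg D (.ofAdd k) * ofVec D v * (ofDeg D (.ofAdd k))⁻¹ = ofVec D (D.σ k v) := by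
  rw [mul_inv_eq_iff_eq_mul]
  ext <;> simp [ofDeg, ofVec, D.σ_zero]

lemma pcomm_ofVec (v w : V) :
    pcomm (ofVec D v) (ofVec D w) = ofCen D (.ofAdd (D.γ v w - D.γ w v)) := by
  have h : ofVec D v * ofVec D w =
      ofVec D w * ofVec D v * ofCen D (.ofAdd (D.γ v w - D.γ w v)) := by
    ext <;> simp [ofCen, ofVec, D.σ_zero, add_comm]
  rw [pcomm, mul_assoc, h]
  group

lemma pow_vec_of_deg_eq_zero {g : Heis D} (hk : g.deg = 0) (n : ℕ) :
    (g ^ n).vec = n • g.vec := by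
  induction n with
  | zero => simp
  | succ n ih => rw [pow_succ', vec_mul, ih, hk, D.σ_zero, add_comm, succ_nsmul]

lemma not_isOfFinOrder [IsAddTorsionFree V] [IsAddTorsionFree A] [IsAddTorsionFree T]
    {g : Heis D} (hg : g ≠ 1) : ¬ IsOfFinOrder g := by
  intro h
  obtain ⟨n, hn, h1⟩ := isOfFinOrder_iff_pow_eq_one.1 h
  have hk : g.deg = 0 := by
    have := deg_zpow g n
    rw [zpow_natCast, h1, deg_one, natCast_zsmul] at this
    exact (nsmul_eq_zero_iff_right hn.ne').1 this.symm
  have hv : g.vec = 0 := by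
    have := pow_vec_of_deg_eq_zero hk n
    rw [h1, vec_one] at this
    exact (nsmul_eq_zero_iff_right hn.ne').1 this.symm
  rw [eq_ofCen hv hk, ← map_pow] at h1
  have h2 := ofCen_injective (h1.trans (map_one _).symm)
  have h3 : n • g.cen = 0 := by simpa using congrArg Multiplicative.toAdd h2
  exact hg (Heis.ext hv ((nsmul_eq_zero_iff_right hn.ne').1 h3) hk)

lemma derivedSeries_three : derivedSeries (Heis D) 3 = ⊥ := by
  have h1 : derivedSeries (Heis D) 1 ≤ (degHom D).ker := by
    rw [derivedSeries_one]
    exact Abelianization.commutator_subset_ker _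
  have h2 : derivedSeries (Heis D) 2 ≤ (ofCen D).range := by
    rw [derivedSeries_succ]
    refine (Subgroup.commutator_mono h1 h1).trans (Subgroup.commutator_le.2 ?_)
    intro x hx y hy
    have hx' : x.deg = 0 := hx
    have hy' : y.deg = 0 := hy
    refine ⟨_, (eq_ofCen ?_ ?_).symm⟩ <;> simp [commutatorElement_def, hx', hy', D.σ_zero]
  rw [derivedSeries_succ, eq_bot_iff]
  refine (Subgroup.commutator_mono h2 h2).trans (Subgroup.commutator_le.2 ?_)
  rintro _ ⟨x, rfl⟩ y -
  rw [Subgroup.mem_bot, commutatorElement_eq_one_iff_mul_comm, ofCen_comm]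

lemma isConj_iff_exists {g₁ g₂ : Heis D} : IsConj g₁ g₂ ↔ ∃ h : Heis D, h * g₁ = g₂ * h := by
  simp only [isConj_iff, mul_inv_eq_iff_eq_mul]

section Map

variable {V' A' T' : Type*} [AddCommGroup V'] [AddCommGroup A'] [AddCommGroup T']
  {D' : HeisData V' A' T'}

/-- The homomorphism that doubles the centre and symmetrizes the cocycle. -/
def map (p : V →+ V') (φ : A →+ A') (τ : T →+ T') (hσ : ∀ k v, p (D.σ k v) = D'.σ (τ k) (p v))
    (hγ : ∀ v w, D'.γ (p v) (p w) = φ (D.γ v w - D.γ w v)) : Heis D →* Heis D' where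
  toFun g := ⟨p g.vec, 2 • φ g.cen - φ (D.γ g.vec g.vec), τ g.deg⟩
  map_one' := by ext <;> simp
  map_mul' g h := by
    ext
    · simp [hσ]
    · simp only [cen_mul, vec_mul, ← hσ, hγ, map_add, map_sub, AddMonoidHom.add_apply, D.γ_σ]
      abel
    · simp

end Map

end Heis

section Translation

variable {R T A : Type*} [CommRing R] [AddCommGroup T] [AddCommGroup A] [Module R A]

/-- Translation of finitely supported functions. -/
noncomputable def shiftBy (R : Type*) {T : Type*} [CommRing R] [AddCommGroup T] (k : T) :
    (T →₀ R) →ₗ[R] (T →₀ R) :=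
  (Finsupp.domLCongr (Equiv.addLeft k)).toLinearMap

@[simp] lemma shiftBy_apply (k : T) (v : T →₀ R) (i : T) :
    shiftBy R k v i = v (i - k) := by
  simp [shiftBy, Finsupp.equivMapDomain_apply, sub_eq_neg_add]

@[simp] lemma shiftBy_single (k i : T) (r : R) :
    shiftBy R k (Finsupp.single i r) = Finsupp.single (k + i) r := by
  simp [shiftBy]

/-- The bilinear form `(v, w) ↦ ∑ v i * w j • κ (i - j)`. -/
noncomputable def convForm (R : Type*) {T A : Type*} [CommRing R] [AddCommGroup T]
    [AddCommGroup A] [Module R A] (κ : T → A) : (T →₀ R) →ₗ[R] (T →₀ R) →ₗ[R] A :=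
  Finsupp.linearCombination R fun i => Finsupp.linearCombination R fun j => κ (i - j)

@[simp] lemma convForm_single_single (κ : T → A) (i j : T) (r s : R) :
    convForm R κ (Finsupp.single i r) (Finsupp.single j s) = r • s • κ (i - j) := by
  simp [convForm]

lemma convForm_apply (κ : T → A) (v w : T →₀ R) :
    convForm R κ v w = v.sum fun i r => r • w.sum fun j s => s • κ (i - j) := by
  simp [convForm, Finsupp.linearCombination_apply, Finsupp.sum]

lemma convForm_shiftBy (κ : T → A) (k : T) (v w : T →₀ R) :
    convForm R κ (shiftBy R k v) (shiftBy R k w) = convForm R κ v w := by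
  have : (convForm R κ).compl₁₂ (shiftBy R k) (shiftBy R k) = convForm R κ := by
    ext i j
    simp
  exact LinearMap.congr_fun₂ this v w

lemma convForm_sub_swap (κ c : T → A) (hc : ∀ i, κ i - κ (-i) = c i) (v w : T →₀ R) :
    convForm R κ v w - convForm R κ w v = convForm R c v w := by
  have : convForm R κ - (convForm R κ).flip = convForm R c := by
    ext i j
    simp [← hc]
  exact LinearMap.congr_fun₂ this v w

lemma convForm_swap_of_odd (c : T → A) (hc : ∀ i, c (-i) = -c i) (v w : T →₀ R) :
    convForm R c w v = -convForm R c v w := by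
  have : (convForm R c).flip = -convForm R c := by
    ext i j
    simp [← hc]
  exact LinearMap.congr_fun₂ this v w

/-- The extension data given by translations and a convolution form. -/
noncomputable def convData (R : Type*) {T A : Type*} [CommRing R] [AddCommGroup T]
    [AddCommGroup A] [Module R A] (κ : T → A) : HeisData (T →₀ R) A T where
  σ k := (shiftBy R k).toAddMonoidHom
  σ_zero v := by ext; simp
  σ_add k l v := by ext; simp [sub_sub]
  γ := LinearMap.toAddMonoidHom'.comp (convForm R κ).toAddMonoidHom
  γ_σ k v w := convForm_shiftBy κ k v w

@[simp] lemma convData_σ (κ : T → A) (k : T) (v : T →₀ R) :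
    (convData R κ).σ k v = shiftBy R k v := rfl

@[simp] lemma convData_γ (κ : T → A) (v w : T →₀ R) :
    (convData R κ).γ v w = convForm R κ v w := rfl

end Translation

section Coefficients

variable (r : ℕ → ℕ)

/-- The odd function supported on the classes of `± 2 ^ u` modulo `2 ^ (u + r u)`. -/
def chi (u : ℕ) (j : ℤ) : ℤ :=
  if (2 : ℤ) ^ (u + r u) ∣ j - 2 ^ u then 1 else if (2 : ℤ) ^ (u + r u) ∣ j + 2 ^ u then -1 else 0

variable {r}

lemma not_two_pow_succ_dvd (u : ℕ) : ¬ (2 : ℤ) ^ (u + 1) ∣ 2 ^ u := by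
  rw [pow_dvd_pow_iff (by norm_num) (by decide)]
  omega

lemma chi_ne_zero (hr : ∀ u, 3 ≤ r u) {u : ℕ} {j : ℤ} (h : chi r u j ≠ 0) :
    (2 : ℤ) ^ u ∣ j ∧ ¬ (2 : ℤ) ^ (u + 1) ∣ j := by
  have h1 : (2 : ℤ) ^ (u + 1) ∣ 2 ^ (u + r u) := pow_dvd_pow _ (by have := hr u; omega)
  have h0 : (2 : ℤ) ^ u ∣ 2 ^ (u + r u) := pow_dvd_pow _ (by omega)
  unfold chi at h
  split_ifs at h with h2 h3
  · refine ⟨(dvd_sub_left dvd_rfl).1 (h0.trans h2), fun h4 => not_two_pow_succ_dvd u ?_⟩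
    exact (dvd_sub_right h4).1 (h1.trans h2)
  · refine ⟨(dvd_add_left dvd_rfl).1 (h0.trans h3), fun h4 => not_two_pow_succ_dvd u ?_⟩
    exact (dvd_add_right h4).1 (h1.trans h3)
  · exact absurd rfl h

lemma chi_neg (hr : ∀ u, 3 ≤ r u) (u : ℕ) (j : ℤ) : chi r u (-j) = -chi r u j := by
  have e1 : -j - 2 ^ u = -(j + 2 ^ u) := by ring
  have e2 : -j + 2 ^ u = -(j - 2 ^ u) := by ring
  have h : ¬ ((2 : ℤ) ^ (u + r u) ∣ j + 2 ^ u ∧ (2 : ℤ) ^ (u + r u) ∣ j - 2 ^ u) := by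
    rintro ⟨h1, h2⟩
    apply not_two_pow_succ_dvd (u + 1)
    have h3 := dvd_sub h1 h2
    rw [show j + 2 ^ u - (j - 2 ^ u) = (2 : ℤ) ^ (u + 1) by ring] at h3
    exact (pow_dvd_pow _ (by have := hr u; omega)).trans h3
  unfold chi
  simp only [e1, e2, dvd_neg]
  split_ifs <;> tauto

lemma chi_add {u : ℕ} {d : ℤ} (h : (2 : ℤ) ^ (u + r u) ∣ d) (j : ℤ) :
    chi r u (j + d) = chi r u j := by
  unfold chi
  simp only [show j + d - 2 ^ u = (j - 2 ^ u) + d by ring,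
    show j + d + 2 ^ u = (j + 2 ^ u) + d by ring, dvd_add_left h]

lemma chi_self (u : ℕ) : chi r u (2 ^ u) = 1 := by simp [chi]

/-- The vector of all `chi r u j`. -/
noncomputable def cvec (r : ℕ → ℕ) (hr : ∀ u, 3 ≤ r u) (j : ℤ) : ℕ →₀ ℤ :=
  Finsupp.onFinset (Finset.range (j.natAbs + 1)) (fun u => chi r u j) fun u h => by
    obtain ⟨h1, h2⟩ := chi_ne_zero hr h
    have hj : j ≠ 0 := fun h => h2 (h ▸ dvd_zero _)
    have := Nat.le_of_dvd (Int.natAbs_pos.2 hj) (Int.natAbs_dvd_natAbs.2 h1)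
    rw [Int.natAbs_pow] at this
    have := Nat.lt_two_pow_self (n := u)
    simp at *
    omega

variable (hr : ∀ u, 3 ≤ r u)

@[simp] lemma cvec_apply (j : ℤ) (u : ℕ) : cvec r hr j u = chi r u j := rfl

lemma cvec_neg (j : ℤ) : cvec r hr (-j) = -cvec r hr j := by
  ext u
  simp [chi_neg hr]

lemma cvec_eq_single {j : ℤ} {u : ℕ} (h1 : (2 : ℤ) ^ u ∣ j) (h2 : ¬ (2 : ℤ) ^ (u + 1) ∣ j) :
    cvec r hr j = Finsupp.single u (chi r u j) := by
  ext w
  rw [cvec_apply, Finsupp.single_apply]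
  split_ifs with h
  · rw [h]
  · by_contra hw
    obtain ⟨h3, h4⟩ := chi_ne_zero hr hw
    rcases Nat.lt_or_gt_of_ne h with h | h
    · exact h2 ((pow_dvd_pow _ h).trans h3)
    · exact h4 ((pow_dvd_pow _ h).trans h1)

lemma cvec_two_pow (u : ℕ) : cvec r hr (2 ^ u) = Finsupp.single u 1 := by
  rw [cvec_eq_single hr dvd_rfl (not_two_pow_succ_dvd u), chi_self]

/-- The values of the cocycle on generators. -/
noncomputable def halfVec (r : ℕ → ℕ) (hr : ∀ u, 3 ≤ r u) (j : ℤ) : ℕ →₀ ℤ :=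
  if 0 < j then cvec r hr j else 0

lemma halfVec_sub (j : ℤ) : halfVec r hr j - halfVec r hr (-j) = cvec r hr j := by
  unfold halfVec
  rcases lt_trichotomy j 0 with h | rfl | h
  · rw [if_neg (by omega), if_pos (by omega), cvec_neg]
    simp
  · have := cvec_neg hr 0
    simp only [neg_zero] at this
    simp [self_eq_neg.1 this]
  · rw [if_pos h, if_neg (by omega), sub_zero]

/-- Shifting `2 ^ u` by an odd multiple of half the period leaves the support of `chi`. -/
lemma chi_two_pow_add_half (hr : ∀ u, 3 ≤ r u) (u : ℕ) {b : ℤ} (hb : Odd b) :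
    chi r u (2 ^ u + 2 ^ (u + r u - 1) * b) = 0 := by
  obtain ⟨s, hs⟩ : ∃ s, r u = s + 3 := ⟨r u - 3, by have := hr u; omega⟩
  obtain ⟨a, rfl⟩ := hb
  rw [chi, hs, show u + (s + 3) - 1 = u + (s + 2) by omega, if_neg, if_neg]
  · rw [show (2 : ℤ) ^ u + 2 ^ (u + (s + 2)) * (2 * a + 1) + 2 ^ u =
      2 ^ (u + 1) * (1 + 2 * (2 ^ s * (2 * a + 1))) by ring,
      show u + (s + 3) = (u + 1) + (s + 2) by ring, pow_add _ (u + 1),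
      mul_dvd_mul_iff_left (by positivity)]
    intro h
    have h2 : (2 : ℤ) ∣ 2 ^ (s + 2) := dvd_pow_self _ (by omega)
    have := h2.trans h
    omega
  · rw [show (2 : ℤ) ^ u + 2 ^ (u + (s + 2)) * (2 * a + 1) - 2 ^ u =
      2 ^ (u + (s + 2)) * (2 * a + 1) by ring, show u + (s + 3) = u + (s + 2) + 1 by ring,
      pow_succ, mul_dvd_mul_iff_left (by positivity)]
    omega

lemma cvec_two_pow_add_half (u : ℕ) {b : ℤ} (hb : Odd b) :
    cvec r hr (2 ^ u + 2 ^ (u + r u - 1) * b) = 0 := by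
  have h : (2 : ℤ) ^ (u + 1) ∣ 2 ^ (u + r u - 1) * b :=
    (pow_dvd_pow _ (by have := hr u; omega)).mul_right _
  rw [cvec_eq_single hr (u := u), chi_two_pow_add_half hr u hb, Finsupp.single_zero]
  · exact (dvd_add_right dvd_rfl).2 ((pow_dvd_pow _ (by omega)).trans h)
  · rw [dvd_add_left h]
    exact not_two_pow_succ_dvd u

lemma cvec_sub_half (hm : Monotone r) {u : ℕ} {δ : ℤ} (hδ : |δ| < 2 ^ u) :
    cvec r hr (2 ^ u + δ) - cvec r hr (2 ^ u + 2 ^ (u + r u - 1) + δ) =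
      if δ = 0 then Finsupp.single u 1 else 0 := by
  split_ifs with h
  · have := cvec_two_pow_add_half hr u (b := 1) odd_one
    rw [mul_one] at this
    rw [h, add_zero, add_zero, this, cvec_two_pow, sub_zero]
  · have hd : ¬ (2 : ℤ) ^ u ∣ δ := fun hd => h (Int.eq_zero_of_abs_lt_dvd hd hδ)
    have hh : (2 : ℤ) ^ u ∣ 2 ^ (u + r u - 1) := pow_dvd_pow _ (by have := hr u; omega)
    ext w
    simp only [Finsupp.sub_apply, cvec_apply, Finsupp.coe_zero, Pi.zero_apply]
    rcases lt_or_ge w u with hw | hw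
    · rw [add_right_comm, chi_add (d := 2 ^ (u + r u - 1)), sub_self]
      exact pow_dvd_pow _ (by have := hm hw.le; omega)
    · have key : ∀ j : ℤ, (2 : ℤ) ^ u ∣ j → chi r w (j + δ) = 0 := fun j hj => by
        by_contra hc
        exact hd ((dvd_add_right hj).1 ((pow_dvd_pow _ hw).trans (chi_ne_zero hr hc).1))
      rw [key _ dvd_rfl, key _ (dvd_add dvd_rfl hh), sub_zero]

end Coefficients

/-- A nonzero element of a finitely generated abelian group survives modulo some positive
integer. -/
lemma exists_notMem_smul_of_fg {M : Type*} [AddCommGroup M] [Module.Finite ℤ M] {x : M}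
    (hx : x ≠ 0) : ∃ q : ℕ, 0 < q ∧ ∀ y : M, x ≠ q • y := by
  set I : Ideal ℤ := LinearMap.ker (LinearMap.toSpanSingleton ℤ M x) with hI
  have hI1 : I ≠ ⊤ := fun h => hx (by
    have : (1 : ℤ) ∈ I := h ▸ Submodule.mem_top
    simpa [hI] using this)
  obtain ⟨J, hJ, hIJ⟩ := Ideal.exists_le_maximal I hI1
  have hne : ∃ p : ℕ, 0 < p ∧ (p : ℤ) ∉ {c : ℤ | IsUnit c} ∧ I ≤ Ideal.span {(p : ℤ)} := by
    obtain ⟨a, ha⟩ := IsPrincipalIdealRing.principal J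
    rcases eq_or_ne a 0 with h0 | h0
    · refine ⟨2, by norm_num, by decide, hIJ.trans ?_⟩
      rw [ha, h0]
      simp
    · refine ⟨a.natAbs, Int.natAbs_pos.2 h0, fun h => hJ.ne_top ?_, hIJ.trans ?_⟩
      · rw [ha]
        exact Ideal.span_singleton_eq_top.2 (Int.isUnit_iff_natAbs_eq.2
          ((Int.natAbs_natCast _).symm.trans (Int.isUnit_iff_natAbs_eq.1 h)))
      · rw [ha, Int.span_natAbs]
  obtain ⟨p, hp0, hpu, hIp⟩ := hne
  by_contra! hcon
  have hmem : x ∈ (⨅ i : ℕ, Ideal.span {(p : ℤ)} ^ i • ⊤ : Submodule ℤ M) := by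
    rw [Submodule.mem_iInf]
    intro i
    obtain ⟨y, hy⟩ := hcon (p ^ i) (pow_pos hp0 i)
    rw [hy, Ideal.span_singleton_pow, ← natCast_zsmul]
    refine Submodule.smul_mem_smul ?_ Submodule.mem_top
    push_cast
    exact Ideal.mem_span_singleton_self _
  obtain ⟨⟨s, hs⟩, hsx⟩ := (Ideal.mem_iInf_smul_pow_eq_bot_iff _ x).1 hmem
  have h1 : 1 - s ∈ I := by
    simp only [hI, LinearMap.mem_ker, LinearMap.toSpanSingleton_apply, sub_smul, one_smul]
    exact sub_eq_zero.2 hsx.symm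
  have h2 : (1 : ℤ) ∈ Ideal.span {(p : ℤ)} := by
    have := Ideal.add_mem _ (hIp h1) hs
    simpa using this
  exact hpu (isUnit_of_dvd_one (Ideal.mem_span_singleton.1 h2))

section CommutatorImage

variable {r : ℕ → ℕ} (hr : ∀ u, 3 ≤ r u)

/-- The subgroup of central elements `[w, v]`, with `w` varying. -/
noncomputable def commImage (r : ℕ → ℕ) (hr : ∀ u, 3 ≤ r u) (v : ℤ →₀ ℤ) :
    Submodule ℤ (ℕ →₀ ℤ) :=
  LinearMap.range ((convForm ℤ (cvec r hr)).flip v)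

lemma convForm_single_left (i : ℤ) (v : ℤ →₀ ℤ) :
    convForm ℤ (cvec r hr) (Finsupp.single i 1) v = v.sum fun j s => s • cvec r hr (i - j) := by
  simp [convForm_apply]

lemma single_mem_commImage (hm : Monotone r) (v : ℤ →₀ ℤ) :
    ∃ S : ℕ, ∀ u ≥ S, ∀ j, Finsupp.single u (v j) ∈ commImage r hr v := by
  refine ⟨∑ i ∈ v.support, ∑ j ∈ v.support, (i - j).natAbs, fun u hu j₀ => ?_⟩
  rcases eq_or_ne (v j₀) 0 with h0 | h0
  · rw [h0, Finsupp.single_zero]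
    exact zero_mem _
  have hsmall : ∀ j ∈ v.support, |j₀ - j| < 2 ^ u := by
    intro j hj
    have h1 : (j₀ - j).natAbs ≤ u := by
      refine le_trans ?_ hu
      refine le_trans ?_ (Finset.single_le_sum
        (f := fun i => ∑ j ∈ v.support, (i - j).natAbs) (fun _ _ => Nat.zero_le _)
        (Finsupp.mem_support_iff.2 h0))
      exact Finset.single_le_sum (f := fun j => (j₀ - j).natAbs) (fun _ _ => Nat.zero_le _) hj
    have h2 := Nat.lt_two_pow_self (n := u)
    have h3 : (j₀ - j).natAbs < 2 ^ u := by omega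
    rw [Int.abs_eq_natAbs]
    exact_mod_cast h3
  refine ⟨Finsupp.single (2 ^ u + j₀) 1 - Finsupp.single (2 ^ u + 2 ^ (u + r u - 1) + j₀) 1, ?_⟩
  rw [LinearMap.flip_apply, map_sub, LinearMap.sub_apply, convForm_single_left,
    convForm_single_left, Finsupp.sum, Finsupp.sum, ← Finset.sum_sub_distrib]
  have : ∀ j ∈ v.support, v j • cvec r hr (2 ^ u + j₀ - j) -
      v j • cvec r hr (2 ^ u + 2 ^ (u + r u - 1) + j₀ - j) =
      if j = j₀ then Finsupp.single u (v j₀) else 0 := by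
    intro j hj
    rw [← smul_sub, add_sub_assoc, add_sub_assoc, cvec_sub_half hr hm (hsmall j hj)]
    by_cases hjj : j = j₀
    · simp [hjj]
    · rw [if_neg (sub_ne_zero.2 (Ne.symm hjj)), if_neg hjj, smul_zero]
  rw [Finset.sum_congr rfl this, Finset.sum_ite_eq', if_pos (Finsupp.mem_support_iff.2 h0)]

lemma apply_mem_span_of_mem_commImage {v : ℤ →₀ ℤ} {b : ℕ →₀ ℤ} (hb : b ∈ commImage r hr v)
    (u : ℕ) : b u ∈ Ideal.span (Set.range v) := by
  obtain ⟨w, rfl⟩ := hb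
  rw [LinearMap.flip_apply, convForm_apply, Finsupp.sum, Finsupp.finsetSum_apply]
  refine sum_mem fun i _ => ?_
  rw [Finsupp.smul_apply, Finsupp.sum, Finsupp.finsetSum_apply]
  refine Submodule.smul_mem _ _ (sum_mem fun j _ => ?_)
  rw [Finsupp.smul_apply, smul_eq_mul]
  exact Ideal.mul_mem_right _ _ (Ideal.subset_span ⟨j, rfl⟩)

/-- Truncation to the first `n` coordinates. -/
def truncate (n : ℕ) : (ℕ →₀ ℤ) →ₗ[ℤ] (Fin n → ℤ) where
  toFun z u := z u
  map_add' _ _ := rfl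
  map_smul' _ _ := rfl

/-- Elements outside the commutator image of `v` stay outside of it in a finite quotient. -/
lemma exists_separating (hm : Monotone r) {v : ℤ →₀ ℤ} {z : ℕ →₀ ℤ}
    (hz : z ∉ commImage r hr v) :
    ∃ n q : ℕ, 0 < q ∧ ∀ b ∈ commImage r hr v, ∃ u < n, ¬ (q : ℤ) ∣ z u - b u := by
  obtain ⟨S, hS⟩ := single_mem_commImage hr hm v
  set n := S + z.support.sup id + 1 with hn
  have hzn : ∀ u ≥ n, z u = 0 := by
    intro u hu
    by_contra h
    have : u ≤ z.support.sup id := Finset.le_sup (f := id) (Finsupp.mem_support_iff.2 h)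
    omega
  set B := (commImage r hr v).map (truncate n)
  have hzB : truncate n z ∉ B := by
    rintro ⟨b, hb, hbz⟩
    apply hz
    have hy : b - z ∈ commImage r hr v := by
      rw [← Finsupp.sum_single (b - z)]
      refine sum_mem fun u _ => ?_
      rcases lt_or_ge u n with hu | hu
      · have : b u = z u := congrFun hbz ⟨u, hu⟩
        simp [this]
      · rw [Finsupp.sub_apply, hzn u hu, sub_zero]
        have h1 : Ideal.span (Set.range v) ≤
            (commImage r hr v).comap (Finsupp.lsingle (R := ℤ) u) := by
          refine Submodule.span_le.2 ?_
          rintro _ ⟨j, rfl⟩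
          exact hS u (by omega) j
        exact h1 (apply_mem_span_of_mem_commImage hr hb u)
    have := sub_mem hb hy
    rwa [sub_sub_cancel] at this
  have hne : B.mkQ (truncate n z) ≠ 0 := by simpa using hzB
  obtain ⟨q, hq, hqy⟩ := exists_notMem_smul_of_fg hne
  refine ⟨n, q, hq, fun b hb => ?_⟩
  by_contra! hcon
  choose y hy using fun u : Fin n => hcon u u.2
  apply hqy (B.mkQ y)
  have h2 : truncate n z - truncate n b = q • y := by
    ext u
    rw [Pi.sub_apply, Pi.smul_apply, nsmul_eq_mul]
    exact hy u
  have h3 : B.mkQ (truncate n b) = 0 := by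
    exact (Submodule.Quotient.mk_eq_zero _).2 (Submodule.mem_map_of_mem hb)
  rw [← map_nsmul, ← h2, map_sub, h3, sub_zero]

end CommutatorImage

instance Heis.finite {V A T : Type*} [AddCommGroup V] [AddCommGroup A] [AddCommGroup T]
    {D : HeisData V A T} [Finite V] [Finite A] [Finite T] : Finite (Heis D) :=
  Finite.of_injective (fun g : Heis D => (g.vec, g.cen, g.deg)) fun g h e => by
    simp only [Prod.mk.injEq] at e
    exact Heis.ext e.1 e.2.1 e.2.2

/-- The group with commutators `[a i, a j] = cvec r hr (i - j)`. -/
abbrev SparseGroup (r : ℕ → ℕ) (hr : ∀ u, 3 ≤ r u) : Type := Heis (convData ℤ (halfVec r hr))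

section Reduction

/-- Reduction of positions modulo `m`. -/
noncomputable def fold (m : ℕ) : (ℤ →₀ ℤ) →+ (ZMod m →₀ ℤ) :=
  Finsupp.mapDomain.addMonoidHom (Int.cast : ℤ → ZMod m)

/-- Reduction of coefficients modulo `Q`. -/
noncomputable def modCoeff (Q : ℕ) (T : Type*) : (T →₀ ℤ) →+ (T →₀ ZMod Q) :=
  Finsupp.mapRange.addMonoidHom (Int.castAddHom (ZMod Q))

@[simp] lemma fold_single (m : ℕ) (i s : ℤ) :
    fold m (Finsupp.single i s) = Finsupp.single (i : ZMod m) s := by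
  simp [fold]

@[simp] lemma modCoeff_apply {Q : ℕ} {T : Type*} (v : T →₀ ℤ) (i : T) :
    modCoeff Q T v i = (v i : ZMod Q) := by
  simp [modCoeff]

@[simp] lemma modCoeff_single (Q : ℕ) {T : Type*} (i : T) (s : ℤ) :
    modCoeff Q T (Finsupp.single i s) = Finsupp.single i (s : ZMod Q) := by
  simp [modCoeff]

lemma fold_shiftBy (m : ℕ) (k : ℤ) (v : ℤ →₀ ℤ) :
    fold m (shiftBy ℤ k v) = shiftBy ℤ (k : ZMod m) (fold m v) := by
  induction v using Finsupp.induction_linear with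
  | zero => simp
  | add f g hf hg => simp only [map_add, hf, hg]
  | single i s => simp

lemma modCoeff_shiftBy (Q : ℕ) {T : Type*} [AddCommGroup T] (k : T) (v : T →₀ ℤ) :
    modCoeff Q T (shiftBy ℤ k v) = shiftBy (ZMod Q) k (modCoeff Q T v) := by
  ext i
  simp

lemma exists_lift {m Q : ℕ} (w : ZMod m →₀ ZMod Q) :
    ∃ v : ℤ →₀ ℤ, modCoeff Q _ (fold m v) = w := by
  induction w using Finsupp.induction_linear with
  | zero => exact ⟨0, by simp⟩
  | add f g hf hg =>
    obtain ⟨v, rfl⟩ := hf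
    obtain ⟨w, rfl⟩ := hg
    exact ⟨v + w, by simp⟩
  | single i s =>
    obtain ⟨i, rfl⟩ := ZMod.intCast_surjective i
    obtain ⟨s, rfl⟩ := ZMod.intCast_surjective s
    exact ⟨Finsupp.single i s, by simp⟩

lemma eventually_modCoeff_eq_zero {T : Type*} (v : T →₀ ℤ) :
    ∀ᶠ Q : ℕ in Filter.atTop, modCoeff Q T v = 0 → v = 0 := by
  rcases eq_or_ne v 0 with h | h
  · exact Filter.Eventually.of_forall fun _ _ => h
  · obtain ⟨i, hi⟩ := Finsupp.ne_iff.1 h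
    filter_upwards [Filter.eventually_gt_atTop (v i).natAbs] with Q hQ hv
    have h1 : ((v i : ℤ) : ZMod Q) = 0 := by rw [← modCoeff_apply, hv, Finsupp.coe_zero,
      Pi.zero_apply]
    rw [ZMod.intCast_zmod_eq_zero_iff_dvd] at h1
    refine absurd (Int.eq_zero_of_abs_lt_dvd h1 ?_) hi
    rw [Int.abs_eq_natAbs]
    exact_mod_cast hQ

lemma eventually_fold_eq_zero (v : ℤ →₀ ℤ) :
    ∀ᶠ m : ℕ in Filter.atTop, fold m v = 0 → v = 0 := by
  filter_upwards [Filter.eventually_gt_atTop (2 * v.support.sup Int.natAbs)] with m hm hv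
  suffices hinj : Set.InjOn (Int.cast : ℤ → ZMod m) v.support by
    exact Finsupp.mapDomain_injOn _ hinj (by simp) (by simp) (hv.trans (map_zero (fold m)).symm)
  intro i hi j hj hij
  have h1 : i.natAbs ≤ v.support.sup Int.natAbs := Finset.le_sup hi
  have h2 : j.natAbs ≤ v.support.sup Int.natAbs := Finset.le_sup hj
  have h3 : (m : ℤ) ∣ j - i := (ZMod.intCast_eq_intCast_iff_dvd_sub _ _ _).1 hij
  have := Int.eq_zero_of_abs_lt_dvd h3 (by rw [Int.abs_eq_natAbs]; omega)
  omega

lemma sub_shiftBy_mul_mem (k : ℤ) (v : ℤ →₀ ℤ) (n : ℤ) :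
    ∃ w, v - shiftBy ℤ (n * k) v = w - shiftBy ℤ k w := by
  induction n with
  | zero => exact ⟨0, by ext; simp⟩
  | succ n ih =>
    obtain ⟨w, hw⟩ := ih
    refine ⟨w + shiftBy ℤ (n * k) v, ?_⟩
    have e : shiftBy ℤ ((n + 1 : ℤ) * k) v = shiftBy ℤ k (shiftBy ℤ (n * k) v) := by
      ext i; simp [add_mul, sub_sub, add_comm]
    rw [map_add, e, ← sub_sub, ← sub_add_eq_add_sub, sub_add_eq_add_sub, add_sub_right_comm,
      ← hw]
    abel
  | pred n ih =>
    obtain ⟨w, hw⟩ := ih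
    refine ⟨w - shiftBy ℤ ((-n - 1) * k) v, ?_⟩
    have e : shiftBy ℤ ((-n : ℤ) * k) v = shiftBy ℤ k (shiftBy ℤ ((-n - 1) * k) v) := by
      ext i; simp only [shiftBy_apply]; congr 1; ring
    rw [map_sub, ← e]
    have : w = v - shiftBy ℤ (-n * k) v + shiftBy ℤ k w := by rw [hw]; abel
    nth_rewrite 1 [this]
    abel

/-- The kernel of reduction modulo `m` consists of the coboundaries of translation by `m`. -/
lemma exists_of_fold_eq_zero {m : ℕ} {k : ℤ} (hk : k.natAbs = m) {v : ℤ →₀ ℤ}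
    (hv : fold m v = 0) : ∃ w, v = w - shiftBy ℤ k w := by
  set g : ZMod m → ℤ := fun x => (x.cast : ℤ)
  have key : ∀ v : ℤ →₀ ℤ, ∃ w, v - Finsupp.mapDomain g (fold m v) = w - shiftBy ℤ k w := by
    intro v
    induction v using Finsupp.induction_linear with
    | zero => exact ⟨0, by simp⟩
    | add f h hf hh =>
      obtain ⟨w₁, h₁⟩ := hf
      obtain ⟨w₂, h₂⟩ := hh
      refine ⟨w₁ + w₂, ?_⟩
      rw [map_add, map_add, Finsupp.mapDomain_add, add_sub_add_comm, h₁, h₂, add_sub_add_comm]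
    | single i s =>
      obtain ⟨n, hn⟩ : ∃ n : ℤ, g i = n * k + i := by
        have h1 : (k : ℤ) ∣ g i - i := by
          rw [← Int.natAbs_dvd, hk]
          refine (ZMod.intCast_eq_intCast_iff_dvd_sub _ _ _).1 ?_
          simp [g]
        obtain ⟨n, hn⟩ := h1
        exact ⟨n, by rw [mul_comm, ← hn]; ring⟩
      obtain ⟨w, hw⟩ := sub_shiftBy_mul_mem k (Finsupp.single i s) n
      refine ⟨w, ?_⟩
      rw [← hw, fold_single, Finsupp.mapDomain_single, hn, shiftBy_single]
  obtain ⟨w, hw⟩ := key v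
  exact ⟨w, by rw [← hw, hv, Finsupp.mapDomain_zero, sub_zero]⟩

lemma eq_zero_of_shiftBy_eq {k : ℤ} (hk : k ≠ 0) {v : ℤ →₀ ℤ} (hv : shiftBy ℤ k v = v) :
    v = 0 := by
  by_contra h
  obtain ⟨i, hi⟩ := Finsupp.ne_iff.1 h
  have h1 : ∀ n : ℕ, v (i - n * k) = v i := by
    intro n
    induction n with
    | zero => simp
    | succ n ih =>
      rw [← ih]
      nth_rewrite 2 [← hv]
      rw [shiftBy_apply]
      congr 1
      push_cast
      ring
  refine Set.infinite_of_injective_forall_mem (f := fun n : ℕ => i - n * k) ?_ (fun n => ?_)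
    (v.support.finite_toSet)
  · intro a b hab
    simpa [hk] using hab
  · simpa [h1] using hi

lemma sum_zmod_eq_zero {A : Type*} [AddCommGroup A] {P Q : ℕ} [NeZero (P * Q)]
    (hA : ∀ a : A, Q • a = 0) (F : ZMod (P * Q) → A) (hF : ∀ i, F (i + P) = F i) :
    ∑ i, F i = 0 := by
  have h1 : ∀ n : ℕ, ∑ i ∈ Finset.range (P * n), F i = n • ∑ i ∈ Finset.range P, F i := by
    intro n
    induction n with
    | zero => simp
    | succ n ih =>
      have h2 : ∀ i : ℕ, F ((P * n + i : ℕ)) = F i := by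
        intro i
        clear ih
        induction n with
        | zero => simp
        | succ n ih =>
          rw [← ih, ← hF ((P * n + i : ℕ) : ZMod (P * Q))]
          congr 1
          push_cast
          ring
      rw [mul_add, mul_one, Finset.sum_range_add, ih, succ_nsmul]
      simp only [h2]
  rw [← hA (∑ i ∈ Finset.range P, F i), ← h1 Q]
  symm
  refine Finset.sum_bij (fun i _ => (i : ZMod (P * Q))) (by simp) ?_ ?_ (by simp)
  · intro a ha b hb hab
    rw [Finset.mem_range] at ha hb
    have := congrArg ZMod.val hab
    rwa [ZMod.val_natCast_of_lt ha, ZMod.val_natCast_of_lt hb] at this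
  · intro b _
    exact ⟨b.val, Finset.mem_range.2 (ZMod.val_lt b), by simp⟩

end Reduction

section FiniteQuotients

variable {r : ℕ → ℕ} (hr : ∀ u, 3 ≤ r u)

/-- Reduction of both positions and coefficients. -/
noncomputable def reduce (m Q : ℕ) : (ℤ →₀ ℤ) →+ (ZMod m →₀ ZMod Q) :=
  (modCoeff Q (ZMod m)).comp (fold m)

lemma reduce_apply (m Q : ℕ) (v : ℤ →₀ ℤ) : reduce m Q v = modCoeff Q _ (fold m v) := rfl

lemma reduce_shiftBy (m Q : ℕ) (k : ℤ) (v : ℤ →₀ ℤ) :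
    reduce m Q (shiftBy ℤ k v) = shiftBy (ZMod Q) (k : ZMod m) (reduce m Q v) := by
  simp only [reduce_apply, fold_shiftBy, modCoeff_shiftBy]

lemma exists_reduce_eq {m Q : ℕ} (w : ZMod m →₀ ZMod Q) : ∃ v : ℤ →₀ ℤ, reduce m Q v = w :=
  exists_lift w

lemma reduce_eq_zero_of_dvd {m m' Q : ℕ} (h : m' ∣ m) {v : ℤ →₀ ℤ} (hv : reduce m Q v = 0) :
    reduce m' Q v = 0 := by
  have key : ∀ v : ℤ →₀ ℤ, reduce m' Q v =
      Finsupp.mapDomain.addMonoidHom (ZMod.castHom h (ZMod m')) (reduce m Q v) := by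
    intro v
    induction v using Finsupp.induction_linear with
    | zero => simp
    | add f g hf hg => simp only [map_add, hf, hg]
    | single i s => simp [reduce_apply]
  rw [key, hv, map_zero]

lemma exists_of_reduce_apply_ne_zero {m Q : ℕ} {v : ℤ →₀ ℤ} {x : ZMod m}
    (h : reduce m Q v x ≠ 0) : ∃ j ∈ v.support, (j : ZMod m) = x := by
  have h1 : x ∈ (fold m v).support := by
    rw [Finsupp.mem_support_iff]
    intro h2
    rw [reduce_apply, modCoeff_apply, h2, Int.cast_zero] at h
    exact h rfl
  classical
  simpa using Finsupp.mapDomain_support h1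

/-- Reduction of the coefficient vectors. -/
def finVec (r : ℕ → ℕ) (n Q m : ℕ) (x : ZMod m) : Fin n → ZMod Q :=
  fun u => (chi r u (x.cast : ℤ) : ZMod Q)

/-- Truncation and reduction of the centre. -/
def cenReduce (n Q : ℕ) : (ℕ →₀ ℤ) →+ (Fin n → ZMod Q) where
  toFun z u := (z u : ZMod Q)
  map_zero' := by ext; simp
  map_add' z w := by ext; simp

@[simp] lemma cenReduce_apply (n Q : ℕ) (z : ℕ →₀ ℤ) (u : Fin n) :
    cenReduce n Q z u = (z u : ZMod Q) := rfl

lemma finVec_intCast {n Q m : ℕ} (hm : ∀ u < n, 2 ^ (u + r u) ∣ m) (j : ℤ) :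
    finVec r n Q m (j : ZMod m) = cenReduce n Q (cvec r hr j) := by
  ext u
  have h1 : (m : ℤ) ∣ ((j : ZMod m).cast : ℤ) - j :=
    (ZMod.intCast_eq_intCast_iff_dvd_sub _ _ _).1 (by simp)
  have h2 : (2 : ℤ) ^ ((u : ℕ) + r u) ∣ ((j : ZMod m).cast : ℤ) - j :=
    dvd_trans (by exact_mod_cast hm u u.2) h1
  have := chi_add h2 j
  rw [add_sub_cancel] at this
  simp [finVec, this]

lemma convForm_reduce {n Q m : ℕ} (hm : ∀ u < n, 2 ^ (u + r u) ∣ m) (v w : ℤ →₀ ℤ) :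
    convForm (ZMod Q) (finVec r n Q m) (reduce m Q v) (reduce m Q w) =
      cenReduce n Q (convForm ℤ (cvec r hr) v w) := by
  induction v using Finsupp.induction_linear with
  | zero => simp
  | add f g hf hg => simp only [map_add, LinearMap.add_apply, hf, hg]
  | single i s =>
    induction w using Finsupp.induction_linear with
    | zero => simp
    | add f g hf hg => simp only [map_add, hf, hg]
    | single j t =>
      simp only [reduce_apply, fold_single, modCoeff_single, convForm_single_single,
        ← Int.cast_sub, finVec_intCast hr hm]
      ext u
      simp

/-- The finite quotients of `SparseGroup r hr`. -/
noncomputable def finHom {n m : ℕ} (Q : ℕ) (hm : ∀ u < n, 2 ^ (u + r u) ∣ m) :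
    SparseGroup r hr →* Heis (convData (ZMod Q) (finVec r n Q m)) :=
  Heis.map (reduce m Q) (cenReduce n Q) (Int.castAddHom (ZMod m))
    (fun k v => reduce_shiftBy m Q k v)
    (fun v w => by
      rw [convData_γ, convData_γ, convData_γ, convForm_reduce hr hm,
        convForm_sub_swap _ _ (halfVec_sub hr)])

section

variable {n m Q : ℕ} (hm : ∀ u < n, 2 ^ (u + r u) ∣ m) (g : SparseGroup r hr)

@[simp] lemma finHom_vec : (finHom hr Q hm g).vec = reduce m Q g.vec := rfl
@[simp] lemma finHom_deg : (finHom hr Q hm g).deg = (g.deg : ZMod m) := rfl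
@[simp] lemma finHom_cen : (finHom hr Q hm g).cen = 2 • cenReduce n Q g.cen -
    cenReduce n Q (convForm ℤ (halfVec r hr) g.vec g.vec) := rfl

end

/-- `g₁` and `g₂` are not conjugate in some finite quotient. -/
def ConjSeparated {G : Type*} [Group G] (g₁ g₂ : G) : Prop :=
  ∃ N : Subgroup G, N.Normal ∧ N.FiniteIndex ∧ ∀ h : G, h * g₁ * h⁻¹ * g₂⁻¹ ∉ N

lemma conjSeparated_of_hom {G H : Type*} [Group G] [Group H] [Finite H] (θ : G →* H) {g₁ g₂ : G}
    (h : ∀ x : H, x * θ g₁ ≠ θ g₂ * x) : ConjSeparated g₁ g₂ := by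
  refine ⟨θ.ker, inferInstance, inferInstance, fun x hx => h (θ x) ?_⟩
  rw [MonoidHom.mem_ker, map_mul, map_inv, mul_inv_eq_one, map_mul, map_mul, map_inv,
    mul_inv_eq_iff_eq_mul] at hx
  exact hx

lemma ConjSeparated.of_conj {G : Type*} [Group G] {g₁ g₂ : G} (x : G)
    (h : ConjSeparated (x * g₁ * x⁻¹) g₂) : ConjSeparated g₁ g₂ := by
  obtain ⟨N, h1, h2, h3⟩ := h
  refine ⟨N, h1, h2, fun y hy => h3 (y * x⁻¹) ?_⟩
  convert hy using 1
  group

variable {hr}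

lemma exists_large (F : Finset (ℤ →₀ ℤ)) :
    ∃ m Q : ℕ, 0 < m ∧ 0 < Q ∧ ∀ v ∈ F, reduce m Q v = 0 → v = 0 := by
  obtain ⟨m, hm0, hm⟩ := ((Filter.eventually_gt_atTop 0).and
    ((Filter.eventually_all_finset F).2 fun v _ => eventually_fold_eq_zero v)).exists
  obtain ⟨Q, hQ0, hQ⟩ := ((Filter.eventually_gt_atTop 0).and
    ((Filter.eventually_all_finset F).2 fun v _ =>
      eventually_modCoeff_eq_zero (fold m v))).exists
  exact ⟨m, Q, hm0, hQ0, fun v hv h => hm v hv (hQ v hv h)⟩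

lemma exists_shift_ne {v₁ v₂ : ℤ →₀ ℤ} (h : ∀ l : ℤ, shiftBy ℤ l v₁ ≠ v₂) :
    ∃ m Q : ℕ, 0 < m ∧ 0 < Q ∧
      ∀ l : ZMod m, shiftBy (ZMod Q) l (reduce m Q v₁) ≠ reduce m Q v₂ := by
  classical
  obtain ⟨m, Q, hm, hQ, H⟩ := exists_large ({v₁, v₂} ∪
    (v₁.support ×ˢ v₂.support).image fun p => shiftBy ℤ (p.2 - p.1) v₁ - v₂)
  refine ⟨m, Q, hm, hQ, fun l hl => ?_⟩
  rcases eq_or_ne v₁ 0 with rfl | hv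
  · rw [map_zero, map_zero] at hl
    exact h 0 (by rw [map_zero, H v₂ (by simp) hl.symm])
  · have h1 : reduce m Q v₁ ≠ 0 := fun h1 => hv (H v₁ (by simp) h1)
    obtain ⟨x, hx⟩ := Finsupp.ne_iff.1 h1
    have hx' : reduce m Q v₂ (x + l) ≠ 0 := by
      rw [← hl, shiftBy_apply, add_sub_cancel_right]
      exact hx
    obtain ⟨i, hi, rfl⟩ := exists_of_reduce_apply_ne_zero hx
    obtain ⟨j, hj, hjl⟩ := exists_of_reduce_apply_ne_zero hx'
    refine h (j - i) (sub_eq_zero.1 (H _ ?_ ?_))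
    · exact Finset.mem_union_right _ (Finset.mem_image.2
        ⟨(i, j), Finset.mem_product.2 ⟨hi, hj⟩, rfl⟩)
    · rw [map_sub, reduce_shiftBy, sub_eq_zero, ← hl, Int.cast_sub, hjl, add_sub_cancel_left]

/-- Solvability of the twisted conjugacy equation in `ℤ →₀ ℤ` is detected by reductions. -/
lemma eventually_twisted {k : ℤ} (hk : k ≠ 0) (v₁ v₂ : ℤ →₀ ℤ) :
    ∀ᶠ Q : ℕ in Filter.atTop, ∀ m : ℕ, k.natAbs ∣ m → ∀ (w : ZMod m →₀ ZMod Q) (l : ZMod m),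
      w + shiftBy (ZMod Q) l (reduce m Q v₁) =
        reduce m Q v₂ + shiftBy (ZMod Q) (k : ZMod m) w →
      ∃ (w₀ : ℤ →₀ ℤ) (l₀ : ℤ), (l₀ : ZMod m) = l ∧
        w₀ + shiftBy ℤ l₀ v₁ = v₂ + shiftBy ℤ k w₀ := by
  have : NeZero k.natAbs := ⟨Int.natAbs_ne_zero.2 hk⟩
  filter_upwards [Filter.eventually_all.2 fun x : ZMod k.natAbs => eventually_modCoeff_eq_zero
    (fold k.natAbs v₂ - shiftBy ℤ x (fold k.natAbs v₁))] with Q hQ m hm w l h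
  obtain ⟨l, rfl⟩ := ZMod.intCast_surjective l
  obtain ⟨w, rfl⟩ := exists_reduce_eq w
  have h1 : reduce m Q (v₂ - shiftBy ℤ l v₁ - (w - shiftBy ℤ k w)) = 0 := by
    rw [map_sub, map_sub, map_sub, reduce_shiftBy, reduce_shiftBy, sub_sub_sub_comm,
      sub_eq_zero, sub_eq_sub_iff_add_eq_add, ← h, add_comm]
  have h2 := reduce_eq_zero_of_dvd hm h1
  have hk0 : (k : ZMod k.natAbs) = 0 := by
    rw [ZMod.intCast_zmod_eq_zero_iff_dvd]
    exact Int.natAbs_dvd.2 dvd_rfl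
  have h3 : reduce k.natAbs Q (w - shiftBy ℤ k w) = 0 := by
    rw [map_sub, reduce_shiftBy, hk0, sub_eq_zero]
    ext
    simp
  rw [map_sub, h3, sub_zero] at h2
  have h4 := hQ (l : ZMod k.natAbs) (by rw [← fold_shiftBy, ← map_sub]; exact h2)
  rw [← fold_shiftBy, ← map_sub] at h4
  obtain ⟨w₀, hw₀⟩ := exists_of_fold_eq_zero rfl h4
  refine ⟨w₀, l, rfl, ?_⟩
  rw [sub_eq_sub_iff_add_eq_add] at hw₀
  rw [hw₀]

/-- In degree `≠ 0`, elements commute as soon as they commute modulo the centre. -/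
lemma commute_of_vec_eq {g h : SparseGroup r hr} (hk : g.deg ≠ 0)
    (hv : (h * g).vec = (g * h).vec) : h * g = g * h := by
  obtain ⟨ζ, ⟨c, hζc⟩, e⟩ : ∃ ζ, (∃ c, ζ = Heis.ofCen _ c) ∧ h * g = g * h * ζ := by
    refine ⟨(g * h)⁻¹ * (h * g), ⟨_, Heis.eq_ofCen ?_ ?_⟩, by group⟩
    · have := congrArg Heis.vec (inv_mul_cancel (g * h))
      rw [Heis.vec_mul] at this ⊢
      rw [hv, this, Heis.vec_one]
    · simp only [Heis.deg_mul, Heis.deg_inv]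
      ring
  have hζ : ∀ x, ζ * x = x * ζ := fun x => by rw [hζc, Heis.ofCen_comm]
  set y := h ^ g.deg * g ^ (-h.deg) with hy
  have hc : g⁻¹ * h * g = h * ζ := by rw [mul_assoc, e]; group
  have h1 : g⁻¹ * h ^ g.deg * g = h ^ g.deg * ζ ^ g.deg := by
    rw [← Commute.mul_zpow (show Commute h ζ from (hζ h).symm), ← hc]
    have := conj_zpow (i := g.deg) (a := g⁻¹) (b := h)
    rw [inv_inv] at this
    exact this.symm
  have h2 : y * g = g * (y * ζ ^ g.deg) := by
    have hcz : g ^ (-h.deg) * ζ ^ g.deg = ζ ^ g.deg * g ^ (-h.deg) :=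
      ((show Commute ζ g from hζ g).symm.zpow_zpow _ _)
    rw [hy, mul_assoc (h ^ g.deg) (g ^ (-h.deg)) (ζ ^ g.deg), hcz,
      ← mul_assoc (h ^ g.deg) (ζ ^ _), ← h1]
    group
  have hdeg : y.deg = 0 := by
    rw [hy, Heis.deg_mul, Heis.deg_zpow, Heis.deg_zpow, smul_eq_mul, smul_eq_mul]
    ring
  have hvec : y.vec = 0 := by
    refine eq_zero_of_shiftBy_eq hk ?_
    have h3 : (ζ ^ g.deg).vec = 0 := by rw [hζc, ← map_zpow]; rfl
    have h4 := congrArg Heis.vec h2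
    simp only [Heis.vec_mul, h3, hdeg, map_zero, add_zero, convData_σ] at h4
    have h5 : shiftBy ℤ 0 g.vec = g.vec := by ext; simp
    rw [h5, add_comm] at h4
    exact (add_left_cancel h4).symm
  have hone : ζ ^ g.deg = 1 := by
    rw [Heis.eq_ofCen hvec hdeg, Heis.ofCen_comm, ← Heis.eq_ofCen hvec hdeg] at h2
    simpa using h2
  have hζ1 : ζ = 1 := by
    by_contra hne
    exact Heis.not_isOfFinOrder hne (isOfFinOrder_iff_zpow_eq_one.2 ⟨_, hk, hone⟩)
  rw [e, hζ1, mul_one]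

end FiniteQuotients

section ConjugacySeparability

variable {r : ℕ → ℕ} {hr : ∀ u, 3 ≤ r u}

lemma finVec_neg (hr : ∀ u, 3 ≤ r u) {n Q m : ℕ} (hm : ∀ u < n, 2 ^ (u + r u) ∣ m) (x : ZMod m) :
    finVec r n Q m (-x) = -finVec r n Q m x := by
  obtain ⟨x, rfl⟩ := ZMod.intCast_surjective x
  rw [← Int.cast_neg, finVec_intCast hr hm, finVec_intCast hr hm, cvec_neg, map_neg]

lemma finVec_add (hr : ∀ u, 3 ≤ r u) {n Q m P : ℕ} (hm : ∀ u < n, 2 ^ (u + r u) ∣ m)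
    (hP : ∀ u < n, 2 ^ (u + r u) ∣ P) (x : ZMod m) :
    finVec r n Q m (x + P) = finVec r n Q m x := by
  obtain ⟨x, rfl⟩ := ZMod.intCast_surjective x
  rw [← Int.cast_natCast P, ← Int.cast_add, finVec_intCast hr hm, finVec_intCast hr hm]
  ext u
  rw [cenReduce_apply, cenReduce_apply, cvec_apply, cvec_apply, chi_add]
  exact_mod_cast hP u u.2

/-- Vectors of small period are orthogonal to everything. -/
lemma convForm_eq_zero_of_periodic (hr : ∀ u, 3 ≤ r u) {n Q P : ℕ} [NeZero (P * Q)]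
    (hP : ∀ u < n, 2 ^ (u + r u) ∣ P) {w : ZMod (P * Q) →₀ ZMod Q} (hw : ∀ i, w (i + P) = w i)
    (v : ZMod (P * Q) →₀ ZMod Q) :
    convForm (ZMod Q) (finVec r n Q (P * Q)) w v = 0 := by
  induction v using Finsupp.induction_linear with
  | zero => simp
  | add f g hf hg => rw [map_add, hf, hg, add_zero]
  | single j s =>
    rw [convForm_apply, Finsupp.sum_fintype _ _ (by simp)]
    simp only [zero_smul, Finsupp.sum_single_index]
    refine sum_zmod_eq_zero (fun a => ?_) _ fun i => ?_
    · ext u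
      simp
    · rw [hw, add_sub_right_comm, finVec_add hr (fun u hu => (hP u hu).mul_right Q) hP]

lemma apply_add_mul_of_shiftBy_eq {R T : Type*} [CommRing R] [AddCommGroup T] {k : T}
    {w : T →₀ R} (h : shiftBy R k w = w) (n : ℤ) (i : T) : w (i + n • k) = w i := by
  induction n generalizing i with
  | zero => simp
  | succ n ih =>
    rw [← ih i, ← DFunLike.congr_fun h (i + ((n : ℤ) + 1) • k), shiftBy_apply]
    congr 1
    rw [add_smul, one_smul]
    abel
  | pred n ih =>
    rw [← ih i, ← DFunLike.congr_fun h (i + -(n : ℤ) • k), shiftBy_apply]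
    congr 1
    rw [sub_smul, one_smul]
    abel

lemma mul_inv_mul_eq_of_comm {G : Type*} [Group G] {x y a b : G} (h₁ : y * a = a * y)
    (h₂ : x * a = b * x) : x * y⁻¹ * a = b * (x * y⁻¹) := by
  rw [mul_assoc, inv_mul_eq_iff_eq_mul.2 (by rw [← mul_assoc, h₁, mul_inv_cancel_right] :
    a = y * (a * y⁻¹)), ← mul_assoc, h₂, mul_assoc]

lemma conjSeparated_of_deg_ne {g₁ g₂ : SparseGroup r hr} (h : g₁.deg ≠ g₂.deg) :
    ConjSeparated g₁ g₂ := by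
  set m := (g₁.deg - g₂.deg).natAbs + 1 with hmdef
  have hm : ∀ u < 0, 2 ^ (u + r u) ∣ m := by simp
  refine conjSeparated_of_hom (finHom hr 1 hm) fun x hx => ?_
  have h1 := congrArg Heis.deg hx
  rw [Heis.deg_mul, Heis.deg_mul, add_comm, add_left_inj, finHom_deg, finHom_deg,
    ZMod.intCast_eq_intCast_iff_dvd_sub] at h1
  exact h (by have := Int.eq_zero_of_abs_lt_dvd h1 (by rw [Int.abs_eq_natAbs]; omega); omega)

lemma conjSeparated_of_vec_ne {g₁ g₂ : SparseGroup r hr}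
    (h : ∀ (w : ℤ →₀ ℤ) (l : ℤ), w + shiftBy ℤ l g₁.vec ≠ g₂.vec + shiftBy ℤ g₂.deg w) :
    ConjSeparated g₁ g₂ := by
  rcases eq_or_ne g₂.deg 0 with hk | hk
  · obtain ⟨m, Q, hm0, hQ0, H⟩ := exists_shift_ne (v₁ := g₁.vec) (v₂ := g₂.vec) fun l hl =>
      h 0 l (by simp [hl])
    have hm : ∀ u < 0, 2 ^ (u + r u) ∣ m := by simp
    have : NeZero m := ⟨hm0.ne'⟩
    have : NeZero Q := ⟨hQ0.ne'⟩
    refine conjSeparated_of_hom (finHom hr Q hm) fun x hx => H x.deg ?_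
    have h1 := congrArg Heis.vec hx
    have h5 : shiftBy (ZMod Q) (0 : ZMod m) x.vec = x.vec := by ext; simp
    simp only [Heis.vec_mul, finHom_vec, finHom_deg, hk, Int.cast_zero, convData_σ, h5] at h1
    exact add_right_cancel ((add_comm _ _).trans h1)
  · obtain ⟨Q, hQ0, hQ⟩ := ((Filter.eventually_gt_atTop 0).and
      (eventually_twisted hk g₁.vec g₂.vec)).exists
    have hm : ∀ u < 0, 2 ^ (u + r u) ∣ g₂.deg.natAbs := by simp
    have : NeZero g₂.deg.natAbs := ⟨Int.natAbs_ne_zero.2 hk⟩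
    have : NeZero Q := ⟨hQ0.ne'⟩
    refine conjSeparated_of_hom (finHom hr Q hm) fun x hx => ?_
    obtain ⟨w, l, -, hw⟩ := hQ _ dvd_rfl x.vec x.deg (congrArg Heis.vec hx)
    exact h w l hw

lemma cenReduce_eq_of_comm {n m Q : ℕ} (hm : ∀ u < n, 2 ^ (u + r u) ∣ m) {g₁ g₂ : SparseGroup r hr}
    (hvec : g₁.vec = g₂.vec) {x : Heis (convData (ZMod Q) (finVec r n Q m))}
    (hx : x * finHom hr Q hm g₁ = finHom hr Q hm g₂ * x)
    (h1 : shiftBy (ZMod Q) x.deg (reduce m Q g₁.vec) = reduce m Q g₁.vec)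
    (h2 : shiftBy (ZMod Q) (g₂.deg : ZMod m) x.vec = x.vec) :
    2 • cenReduce n Q (g₂.cen - g₁.cen) =
      2 • convForm (ZMod Q) (finVec r n Q m) x.vec (reduce m Q g₁.vec) := by
  have h3 := congrArg Heis.cen hx
  simp only [Heis.cen_mul, finHom_cen, finHom_vec, finHom_deg, convData_σ, convData_γ, h2, h1,
    ← hvec] at h3
  rw [convForm_swap_of_odd _ (finVec_neg hr hm) x.vec] at h3
  rw [map_sub, smul_sub, sub_eq_iff_eq_add, two_nsmul (convForm _ _ _ _)]
  have h4 := sub_eq_zero.2 h3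
  rw [← sub_eq_zero, ← neg_eq_zero, ← h4]
  abel

lemma conjSeparated_of_deg_eq_zero (hmono : Monotone r) {g₁ g₂ : SparseGroup r hr}
    (hg : ¬ IsConj g₁ g₂) (hdeg : g₁.deg = g₂.deg) (hvec : g₁.vec = g₂.vec) (hk : g₂.deg = 0) :
    ConjSeparated g₁ g₂ := by
  have hz : g₂.cen - g₁.cen ∉ commImage r hr g₁.vec := by
    rintro ⟨w, hw⟩
    refine hg (Heis.isConj_iff_exists.2 ⟨Heis.ofVec _ w, ?_⟩)
    have hs : ∀ v : ℤ →₀ ℤ, shiftBy ℤ 0 v = v := fun v => by ext; simp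
    rw [LinearMap.flip_apply, ← convForm_sub_swap _ _ (halfVec_sub hr)] at hw
    ext1
    · simp [Heis.ofVec, hs, hk, hvec, add_comm]
    · simp only [Heis.ofVec, Heis.cen_mul, convData_σ, convData_γ, hs, hk, ← hvec]
      rw [sub_eq_sub_iff_add_eq_add] at hw
      rw [zero_add, add_zero, add_comm, hw]
    · simp [Heis.ofVec, hdeg]
  obtain ⟨n, q, hq, H⟩ := exists_separating hr hmono hz
  have hm : ∀ u < n, 2 ^ (u + r u) ∣ 2 ^ (n + r n) := fun u hu =>
    pow_dvd_pow _ (add_le_add hu.le (hmono hu.le))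
  have : NeZero (2 * q) := ⟨by omega⟩
  refine conjSeparated_of_hom (finHom hr (2 * q) hm) fun x hx => ?_
  have h5 : shiftBy (ZMod (2 * q)) (g₂.deg : ZMod (2 ^ (n + r n))) x.vec = x.vec := by
    ext; simp [hk]
  have h1 : shiftBy _ x.deg (reduce _ _ g₁.vec) = reduce (2 ^ (n + r n)) (2 * q) g₁.vec := by
    have h1 := congrArg Heis.vec hx
    simp only [Heis.vec_mul, finHom_vec, finHom_deg, convData_σ, h5, ← hvec] at h1
    exact add_right_cancel ((add_comm _ _).trans h1)
  have h2 := cenReduce_eq_of_comm hm hvec hx h1 h5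
  obtain ⟨w, hw⟩ := exists_reduce_eq x.vec
  rw [← hw, convForm_reduce hr hm] at h2
  obtain ⟨u, hu, hd⟩ := H (convForm ℤ (cvec r hr) w g₁.vec) ⟨w, rfl⟩
  apply hd
  have h3 := congrFun h2 ⟨u, hu⟩
  simp only [Pi.smul_apply, cenReduce_apply, nsmul_eq_mul] at h3
  rw [← sub_eq_zero, ← mul_sub] at h3
  have h4 : ((2 * ((g₂.cen - g₁.cen) u - (convForm ℤ (cvec r hr) w g₁.vec) u) : ℤ) :
      ZMod (2 * q)) = 0 := by
    push_cast at h3 ⊢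
    exact h3
  rw [ZMod.intCast_zmod_eq_zero_iff_dvd, Nat.cast_mul, Nat.cast_ofNat,
    mul_dvd_mul_iff_left (by norm_num)] at h4
  exact h4

lemma conjSeparated_of_deg_ne_zero (hmono : Monotone r) {g₁ g₂ : SparseGroup r hr}
    (hg : ¬ IsConj g₁ g₂) (hdeg : g₁.deg = g₂.deg) (hvec : g₁.vec = g₂.vec) (hk : g₂.deg ≠ 0) :
    ConjSeparated g₁ g₂ := by
  have hz : g₂.cen - g₁.cen ≠ 0 := by
    intro h
    rw [sub_eq_zero] at h
    exact hg (by rw [Heis.ext hvec h.symm hdeg])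
  obtain ⟨u, hu⟩ := Finsupp.ne_iff.1 hz
  obtain ⟨Q, ⟨hQ0, hQz⟩, hQ⟩ := (((Filter.eventually_gt_atTop 0).and
    (Filter.eventually_gt_atTop (2 * (g₂.cen - g₁.cen) u).natAbs)).and
      (eventually_twisted hk g₁.vec g₂.vec)).exists
  set n := u + 1 with hn
  set P := g₂.deg.natAbs * 2 ^ (n + r n) with hPdef
  have hP : ∀ u < n, 2 ^ (u + r u) ∣ P := fun u hu =>
    (pow_dvd_pow _ (add_le_add hu.le (hmono hu.le))).mul_left _
  have hm : ∀ u < n, 2 ^ (u + r u) ∣ P * Q := fun u hu => (hP u hu).mul_right _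
  have hP0 : P ≠ 0 := mul_ne_zero (Int.natAbs_ne_zero.2 hk) (by positivity)
  have : NeZero Q := ⟨hQ0.ne'⟩
  have : NeZero (P * Q) := ⟨mul_ne_zero hP0 hQ0.ne'⟩
  refine conjSeparated_of_hom (finHom hr Q hm) fun x hx => ?_
  obtain ⟨w, l, hl, hw⟩ := hQ (P * Q) ((dvd_mul_right _ _).mul_right _) x.vec x.deg
    (congrArg Heis.vec hx)
  set y : SparseGroup r hr := ⟨w, 0, l⟩
  have hy : y * g₁ = g₁ * y := by
    refine commute_of_vec_eq (by rwa [hdeg]) ?_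
    rw [Heis.vec_mul, Heis.vec_mul, hdeg]
    nth_rewrite 2 [hvec]
    exact hw
  set x' := x * (finHom hr Q hm y)⁻¹ with hx'
  have hxx : x' * finHom hr Q hm g₁ = finHom hr Q hm g₂ * x' := by
    have h1 : finHom hr Q hm y * finHom hr Q hm g₁ = finHom hr Q hm g₁ * finHom hr Q hm y := by
      rw [← map_mul, hy, map_mul]
    exact mul_inv_mul_eq_of_comm h1 hx
  have hx0 : x'.deg = 0 := by
    simp [hx', y, ← hl]
  have h1 : shiftBy (ZMod Q) x'.deg (reduce (P * Q) Q g₁.vec) = reduce _ _ g₁.vec := by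
    ext; simp [hx0]
  have h2 : shiftBy (ZMod Q) (g₂.deg : ZMod (P * Q)) x'.vec = x'.vec := by
    have h3 := congrArg Heis.vec hxx
    simp only [Heis.vec_mul, finHom_vec, finHom_deg, convData_σ, h1, ← hvec] at h3
    exact (add_left_cancel ((add_comm _ _).trans h3)).symm
  have h3 := cenReduce_eq_of_comm hm hvec hxx h1 h2
  rw [convForm_eq_zero_of_periodic hr hP, smul_zero] at h3
  · have h4 := congrFun h3 ⟨u, by omega⟩
    have h5 : ((2 * (g₂.cen - g₁.cen) u : ℤ) : ZMod Q) = 0 := by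
      simpa using h4
    rw [ZMod.intCast_zmod_eq_zero_iff_dvd] at h5
    have := Int.eq_zero_of_abs_lt_dvd h5 (by rw [Int.abs_eq_natAbs]; exact_mod_cast hQz)
    exact hu (by simpa using this)
  · intro i
    obtain ⟨c, hc⟩ : g₂.deg ∣ (P : ℤ) := by
      rw [hPdef, Nat.cast_mul]
      exact (Int.dvd_natAbs.2 dvd_rfl).mul_right _
    have := apply_add_mul_of_shiftBy_eq h2 c i
    rw [← this]
    congr 2
    rw [← Int.cast_natCast P, hc]
    simp [mul_comm]

theorem conjSep_sparseGroup (hmono : Monotone r) : ConjSep (SparseGroup r hr) := by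
  intro g₁ g₂ hg
  change ConjSeparated g₁ g₂
  by_cases hdeg : g₁.deg = g₂.deg
  swap
  · exact conjSeparated_of_deg_ne hdeg
  by_cases hv : ∃ (w : ℤ →₀ ℤ) (l : ℤ), w + shiftBy ℤ l g₁.vec = g₂.vec + shiftBy ℤ g₂.deg w
  swap
  · push Not at hv
    exact conjSeparated_of_vec_ne hv
  obtain ⟨w, l, hv⟩ := hv
  set x : SparseGroup r hr := ⟨w, 0, l⟩
  have hconj : IsConj g₁ (x * g₁ * x⁻¹) := isConj_iff.2 ⟨x, rfl⟩
  have hg' : ¬ IsConj (x * g₁ * x⁻¹) g₂ := fun h => hg (hconj.trans h)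
  have hdeg' : (x * g₁ * x⁻¹).deg = g₂.deg := by
    simp [hdeg]
  have hvec' : (x * g₁ * x⁻¹).vec = g₂.vec := by
    set g := x * g₁ * x⁻¹ with hgdef
    have e : x * g₁ = g * x := by rw [hgdef]; group
    have e1 := congrArg Heis.vec e
    rw [Heis.vec_mul, Heis.vec_mul, hdeg'] at e1
    exact add_right_cancel (e1.symm.trans hv)
  refine ConjSeparated.of_conj x ?_
  rcases eq_or_ne g₂.deg 0 with hk | hk
  · exact conjSeparated_of_deg_eq_zero hmono hg' hdeg' hvec' hk
  · exact conjSeparated_of_deg_ne_zero hmono hg' hdeg' hvec' hk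

end ConjugacySeparability

namespace SparseGroup

variable {r : ℕ → ℕ} (hr : ∀ u, 3 ≤ r u)

/-- The stable letter. -/
noncomputable def t : SparseGroup r hr := Heis.ofDeg _ (.ofAdd 1)

/-- The generators `a i`. -/
noncomputable def a (i : ℤ) : SparseGroup r hr := Heis.ofVec _ (Finsupp.single i 1)

/-- The central embedding. -/
noncomputable def cen : Multiplicative (ℕ →₀ ℤ) →* SparseGroup r hr := Heis.ofCen _

/-- The commutators of the `a i`. -/
noncomputable def c (i : ℤ) : SparseGroup r hr := cen hr (.ofAdd (cvec r hr i))

lemma t_zpow (k : ℤ) : t hr ^ k = Heis.ofDeg _ (.ofAdd k) := by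
  rw [t, ← map_zpow, ← ofAdd_zsmul, smul_eq_mul, mul_one]

lemma t_zpow_conj_a (k i : ℤ) : t hr ^ k * a hr i * (t hr ^ k)⁻¹ = a hr (k + i) := by
  rw [t_zpow, a, Heis.ofDeg_conj_ofVec, convData_σ, shiftBy_single, a]

lemma pcomm_a (i j : ℤ) : pcomm (a hr i) (a hr j) = c hr (i - j) := by
  rw [a, a, Heis.pcomm_ofVec, convData_γ, convData_γ, convForm_sub_swap _ _ (halfVec_sub hr),
    convForm_single_single, one_smul, one_smul]
  rfl

lemma cen_comm (z : Multiplicative (ℕ →₀ ℤ)) (g : SparseGroup r hr) :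
    cen hr z * g = g * cen hr z := Heis.ofCen_comm z g

lemma c_comm (i : ℤ) (g : SparseGroup r hr) : c hr i * g = g * c hr i := cen_comm hr _ g

lemma closure_eq_top : Subgroup.closure {t hr, a hr 0} = ⊤ := by
  set K := Subgroup.closure {t hr, a hr 0}
  have ht : t hr ∈ K := Subgroup.subset_closure (by simp)
  have ha : ∀ i, a hr i ∈ K := fun i => by
    have := t_zpow_conj_a hr i 0
    rw [add_zero] at this
    rw [← this]
    exact K.mul_mem (K.mul_mem (K.zpow_mem ht _) (Subgroup.subset_closure (by simp)))
      (K.inv_mem (K.zpow_mem ht _))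
  have hc : ∀ i, c hr i ∈ K := fun i => by
    rw [← sub_zero i, ← pcomm_a, pcomm]
    exact K.mul_mem (K.mul_mem (K.mul_mem (K.inv_mem (ha _)) (K.inv_mem (ha _))) (ha _)) (ha _)
  have hz : ∀ z : ℕ →₀ ℤ, cen hr (.ofAdd z) ∈ K := fun z => by
    induction z using Finsupp.induction_linear with
    | zero => exact (map_one (cen hr)).symm ▸ K.one_mem
    | add f g hf hg =>
      rw [ofAdd_add, map_mul]
      exact K.mul_mem hf hg
    | single u s =>
      have := K.zpow_mem (hc (2 ^ u)) s
      rwa [c, ← map_zpow, ← ofAdd_zsmul, cvec_two_pow, Finsupp.smul_single, smul_eq_mul,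
        mul_one] at this
  have hv : ∀ v : ℤ →₀ ℤ, Heis.ofVec (convData ℤ (halfVec r hr)) v ∈ K := fun v => by
    have hs : ∀ v : ℤ →₀ ℤ, shiftBy ℤ 0 v = v := fun v => by ext; simp
    have key : ∀ v w : ℤ →₀ ℤ, Heis.ofVec (convData ℤ (halfVec r hr)) (v + w) =
        Heis.ofVec _ v * Heis.ofVec _ w * cen hr (.ofAdd (-convForm ℤ (halfVec r hr) v w)) := by
      intro v w
      ext1 <;> simp [Heis.ofVec, cen, Heis.ofCen, hs]
    have hadd : ∀ v w, Heis.ofVec (convData ℤ (halfVec r hr)) v ∈ K → Heis.ofVec _ w ∈ K →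
        Heis.ofVec (convData ℤ (halfVec r hr)) (v + w) ∈ K := fun v w h1 h2 => by
      rw [key]
      exact K.mul_mem (K.mul_mem h1 h2) (hz _)
    have h0 : Heis.ofVec (convData ℤ (halfVec r hr)) 0 ∈ K := K.one_mem
    induction v using Finsupp.induction_linear with
    | zero => exact h0
    | add f g hf hg => exact hadd f g hf hg
    | single i s =>
      induction s with
      | zero => rw [Finsupp.single_zero]; exact h0
      | succ n ih => rw [Finsupp.single_add]; exact hadd _ _ ih (ha i)
      | pred n ih =>
        rw [sub_eq_add_neg, Finsupp.single_add]
        refine hadd _ _ ih ?_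
        have h1 : Heis.ofVec (convData ℤ (halfVec r hr)) (Finsupp.single i (-1)) =
            (a hr i)⁻¹ * cen hr (.ofAdd (-convForm ℤ (halfVec r hr) (Finsupp.single i 1)
              (Finsupp.single i 1))) := by
          ext1 <;> simp [Heis.ofVec, cen, Heis.ofCen, a, hs]
        rw [h1]
        exact K.mul_mem (K.inv_mem (ha i)) (hz _)
  rw [eq_top_iff]
  intro g _
  have hg : g = Heis.ofVec _ g.vec * cen hr (.ofAdd (Heis.cen g)) * t hr ^ g.deg := by
    rw [t_zpow]
    ext1 <;> simp [Heis.ofVec, cen, Heis.ofCen, Heis.ofDeg]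
  rw [hg]
  exact K.mul_mem (K.mul_mem (hv _) (hz _)) (K.zpow_mem ht _)

/-- The images of Hall's generators. -/
noncomputable def genMap : Gen → SparseGroup r hr
  | .t => t hr
  | .a i => a hr i
  | .c i => c hr i

lemma lift_genMap_eq_one : ∀ x ∈ hallRels, FreeGroup.lift (genMap hr) x = 1 := by
  have hcomm : ∀ (i : ℤ) (g : SparseGroup r hr), pcomm (c hr i) g = 1 := fun i g => by
    rw [pcomm, mul_assoc, c_comm]
    group
  have hconj : ∀ i, t hr * a hr i * (t hr)⁻¹ = a hr (i + 1) := fun i => by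
    have := t_zpow_conj_a hr 1 i
    rwa [zpow_one, add_comm] at this
  rintro x ((((⟨i, rfl⟩ | ⟨i, rfl⟩) | ⟨p, rfl⟩) | ⟨p, rfl⟩) | ⟨p, rfl⟩)
  · simp [genMap, hconj]
  · simp [genMap, ← c_comm]
  · have := pcomm_a hr p.1 p.2
    rw [pcomm] at this
    simp [genMap, pcomm, this]
  · have := hcomm p.1 (a hr p.2)
    rw [pcomm] at this
    simp [genMap, pcomm, this]
  · have := hcomm p.1 (c hr p.2)
    rw [pcomm] at this
    simp [genMap, pcomm, this]

/-- The projection from Hall's group. -/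
noncomputable def hallHom : G₀ →* SparseGroup r hr :=
  PresentedGroup.toGroup (lift_genMap_eq_one hr)

lemma hallHom_surjective : Function.Surjective (hallHom hr) := by
  rw [← MonoidHom.range_eq_top, eq_top_iff, ← closure_eq_top hr, Subgroup.closure_le]
  rintro x (rfl | rfl)
  · exact ⟨PresentedGroup.of Gen.t, PresentedGroup.toGroup.of _⟩
  · exact ⟨PresentedGroup.of (Gen.a 0), PresentedGroup.toGroup.of _⟩

lemma c_two_pow_ne_one (u : ℕ) : c hr (2 ^ u) ≠ 1 := by
  intro h
  have := Heis.ofCen_injective (h.trans (map_one (cen hr)).symm)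
  rw [cvec_two_pow] at this
  simpa using DFunLike.congr_fun (congrArg Multiplicative.toAdd this) u

lemma c_eq_word (N : ℕ) : c hr N = ((List.replicate N (t hr) ++ [(a hr 0)⁻¹] ++
    List.replicate N (t hr)⁻¹ ++ [(a hr 0)⁻¹] ++ List.replicate N (t hr) ++ [a hr 0] ++
    List.replicate N (t hr)⁻¹ ++ [a hr 0])).prod := by
  have h1 := t_zpow_conj_a hr N 0
  rw [add_zero, zpow_natCast] at h1
  rw [← sub_zero (N : ℤ), ← pcomm_a, ← h1, pcomm]
  simp only [List.prod_append, List.prod_replicate, List.prod_singleton, mul_inv_rev, inv_pow,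
    inv_inv, mul_assoc]

lemma wordNormLe_c {N n : ℕ} (h : 4 * N + 4 ≤ n) :
    WordNormLe {t hr, a hr 0} (c hr N) n := by
  refine ⟨_, ?_, ?_, (c_eq_word hr N).symm⟩
  · simp
    omega
  · simp only [List.mem_append, List.mem_replicate, List.mem_singleton]
    rintro x (((((((⟨_, rfl⟩ | rfl) | ⟨_, rfl⟩) | rfl) | ⟨_, rfl⟩) | rfl) | ⟨_, rfl⟩) | rfl) <;>
      simp

lemma le_index {u : ℕ} {K : Subgroup (SparseGroup r hr)} [K.Normal] [K.FiniteIndex]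
    (hK : c hr (2 ^ u) ∉ K) : r u ≤ K.index := by
  by_contra! h
  apply hK
  obtain ⟨s, b, hb, hd⟩ := Nat.exists_eq_two_pow_mul_odd (n := K.index)
    Subgroup.FiniteIndex.index_ne_zero
  have hs : s < r u := by
    have h1 : 2 ^ s ≤ K.index := by
      rw [hd]
      exact Nat.le_mul_of_pos_right _ hb.pos
    have := Nat.lt_two_pow_self (n := s)
    omega
  set D : ℤ := 2 ^ (u + r u - 1) * b with hD
  have htD : t hr ^ D ∈ K := by
    obtain ⟨e, he⟩ : (K.index : ℤ) ∣ D := by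
      rw [hd, hD]
      push_cast
      exact mul_dvd_mul_right (pow_dvd_pow _ (by omega)) _
    rw [he, zpow_mul, zpow_natCast]
    exact K.zpow_mem (K.pow_index_mem _) _
  have h1 : c hr (2 ^ u + D) = 1 := by
    rw [c, hD, cvec_two_pow_add_half hr u (by exact_mod_cast hb)]
    exact map_one (cen hr)
  have h2 : QuotientGroup.mk' K (a hr (2 ^ u + D)) = QuotientGroup.mk' K (a hr (2 ^ u)) := by
    rw [add_comm, ← t_zpow_conj_a, map_mul, map_mul, map_inv,
      (QuotientGroup.eq_one_iff _).2 htD |> (id : _ → QuotientGroup.mk' K (t hr ^ D) = 1)]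
    group
  have h3 : ∀ i, c hr i = pcomm (a hr i) (a hr 0) := fun i => by rw [pcomm_a, sub_zero]
  rw [← QuotientGroup.eq_one_iff]
  change QuotientGroup.mk' K _ = 1
  rw [← map_one (QuotientGroup.mk' K), ← h1, h3, h3, pcomm, pcomm]
  simp only [map_mul, map_inv, h2]

lemma exists_scale {n : ℕ} (hn : 8 ≤ n) : ∃ u, 4 * 2 ^ u + 4 ≤ n ∧ n ≤ 8 * 2 ^ u + 4 := by
  have h1 := Nat.pow_log_le_self 2 (x := (n - 4) / 4) (by omega)
  have h2 := Nat.lt_pow_succ_log_self (b := 2) (by norm_num) ((n - 4) / 4)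
  rw [pow_succ] at h2
  exact ⟨Nat.log 2 ((n - 4) / 4), by omega, by omega⟩

lemma goodGroup {f : ℕ → ℕ} (hf : Monotone f) (hrf : ∀ u, r u = f (8 * 2 ^ u + 4) + 3) :
    GoodGroup f (SparseGroup r hr) := by
  classical
  have hmono : Monotone r := fun u w huw => by
    have : (2 : ℕ) ^ u ≤ 2 ^ w := Nat.pow_le_pow_right (by norm_num) huw
    rw [hrf, hrf]
    exact Nat.add_le_add_right (hf (by omega)) 3
  have hS : (({t hr, a hr 0} : Finset (SparseGroup r hr)) : Set (SparseGroup r hr)) =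
      {t hr, a hr 0} := by simp
  refine ⟨{t hr, a hr 0}, hallHom hr, hallHom_surjective hr, ?_,
    fun g hg => Heis.not_isOfFinOrder hg, Heis.derivedSeries_three,
    conjSep_sparseGroup hmono, 8, fun n hn => ?_⟩
  · rw [hS]
    exact closure_eq_top hr
  · obtain ⟨u, h1, h2⟩ := exists_scale hn
    refine ⟨c hr (2 ^ u), c_two_pow_ne_one hr u, ?_, fun K hK hfin hcK => ?_⟩
    · rw [hS]
      have := wordNormLe_c hr (N := 2 ^ u) h1
      rwa [Nat.cast_pow, Nat.cast_ofNat] at this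
    · have h3 := le_index hr hcK
      have h4 := hf h2
      rw [hrf] at h3
      omega

end SparseGroup

open scoped IsMulCommutative in
lemma exists_hom_of_commute {ι Q : Type*} [Group Q] (α : ι → Q)
    (h : ∀ i j, α i * α j = α j * α i) :
    ∃ μ : Multiplicative (ι →₀ ℤ) →* Q, ∀ i s, μ (.ofAdd (Finsupp.single i s)) = α i ^ s := by
  have := Subgroup.isMulCommutative_closure (k := Set.range α) (by
    rintro _ ⟨i, rfl⟩ _ ⟨j, rfl⟩
    exact h i j)
  let β : ι → Additive (Subgroup.closure (Set.range α)) := fun i =>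
    .ofMul ⟨α i, Subgroup.subset_closure ⟨i, rfl⟩⟩
  let ν : (ι →₀ ℤ) →+ Additive (Subgroup.closure (Set.range α)) :=
    Finsupp.liftAddHom fun i => zmultiplesHom _ (β i)
  refine ⟨(Subgroup.closure (Set.range α)).subtype.comp (AddMonoidHom.toMultiplicativeLeft ν),
    fun i s => ?_⟩
  have : ν (Finsupp.single i s) = s • β i := by simp [ν]
  change (Subgroup.closure (Set.range α)).subtype (ν (Finsupp.single i s)).toMul = _
  rw [this]
  rfl

namespace SparseGroup

variable {r : ℕ → ℕ} {hr : ∀ u, 3 ≤ r u}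

/-- The commutator of two translates of `A` at distance `j`. -/
def shiftComm {P : Type*} [Group P] (T A : P) (j : ℤ) : P := pcomm (T ^ j * A * (T ^ j)⁻¹) A

lemma vec_zpow_of_deg_eq_zero {V A T : Type*} [AddCommGroup V] [AddCommGroup A] [AddCommGroup T]
    {D : HeisData V A T} {g : Heis D} (hk : g.deg = 0) (n : ℤ) : (g ^ n).vec = n • g.vec := by
  cases n with
  | ofNat n => simpa using Heis.pow_vec_of_deg_eq_zero hk n
  | negSucc n =>
    rw [zpow_negSucc, Heis.vec_inv, Heis.pow_vec_of_deg_eq_zero hk, ← zpow_natCast,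
      Heis.deg_zpow, hk, smul_zero, neg_zero, D.σ_zero, negSucc_zsmul]

lemma pcomm_shift {P : Type*} [Group P] (T A : P) (i j : ℤ) :
    pcomm (T ^ i * A * (T ^ i)⁻¹) (T ^ j * A * (T ^ j)⁻¹) =
      T ^ j * shiftComm T A (i - j) * (T ^ j)⁻¹ := by
  rw [shiftComm, pcomm, pcomm, zpow_sub]
  group

lemma pcomm_eq_one_iff {P : Type*} [Group P] {x y : P} : pcomm x y = 1 ↔ x * y = y * x := by
  rw [pcomm, mul_assoc, mul_eq_one_iff_inv_eq, mul_inv_rev, inv_inv, inv_inv, eq_comm]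

lemma pcomm_inv {P : Type*} [Group P] (x y : P) : (pcomm x y)⁻¹ = pcomm y x := by
  rw [pcomm, pcomm]
  group

lemma map_pcomm {P Q : Type*} [Group P] [Group Q] (f : P →* Q) (x y : P) :
    f (pcomm x y) = pcomm (f x) (f y) := by
  simp only [pcomm, map_mul, map_inv]

variable {P : Type*} [Group P] {T A : P}

lemma pcomm_shift_mem {C : Subgroup P} [C.Normal] (hC : ∀ j : ℕ, shiftComm T A j ∈ C) (i j : ℤ) :
    pcomm (T ^ i * A * (T ^ i)⁻¹) (T ^ j * A * (T ^ j)⁻¹) ∈ C := by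
  wlog hij : j ≤ i generalizing i j with H
  · have := C.inv_mem (H j i (by omega))
    rwa [pcomm_inv] at this
  · obtain ⟨n, hn⟩ := Int.eq_ofNat_of_zero_le (sub_nonneg.2 hij)
    rw [pcomm_shift, hn]
    exact Subgroup.Normal.conj_mem inferInstance _ (hC n) _

/-- Modulo a normal subgroup containing all commutators of translates of `A`, every element is
determined by a vector and a degree. -/
lemma exists_normal_form (hgen : Subgroup.closure {T, A} = ⊤) {C : Subgroup P} [C.Normal]
    (hC : ∀ j : ℕ, shiftComm T A j ∈ C) (φ : P →* SparseGroup r hr) (hT : φ T = t hr)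
    (hA : φ A = a hr 0) (x : P) :
    ∃ (y : P) (k : ℤ), x⁻¹ * (y * T ^ k) ∈ C ∧ (φ y).deg = 0 ∧ ((φ y).vec = 0 → y ∈ C) := by
  set τ := QuotientGroup.mk' C T
  set α : ℤ → P := fun i => T ^ i * A * (T ^ i)⁻¹ with hα
  have hφα : ∀ i, φ (α i) = a hr i := fun i => by
    rw [hα]
    simp only [map_mul, map_inv, map_zpow, hT, hA, t_zpow_conj_a, add_zero]
  obtain ⟨μ, hμ⟩ := exists_hom_of_commute (fun i => QuotientGroup.mk' C (α i)) fun i j => by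
    have := (QuotientGroup.eq_one_iff _).2 (pcomm_shift_mem hC i j)
    change QuotientGroup.mk' C _ = 1 at this
    rwa [map_pcomm, pcomm_eq_one_iff] at this
  have hlift : ∀ v : ℤ →₀ ℤ, ∃ y, QuotientGroup.mk' C y = μ (.ofAdd v) ∧ (φ y).deg = 0 ∧
      (φ y).vec = v := by
    intro v
    induction v using Finsupp.induction_linear with
    | zero => exact ⟨1, by simp⟩
    | add f g hf hg =>
      obtain ⟨y, hy, hy0, hyv⟩ := hf
      obtain ⟨z, hz, hz0, hzv⟩ := hg
      refine ⟨y * z, by rw [map_mul, hy, hz, ofAdd_add, map_mul], ?_, ?_⟩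
      · simp [hy0, hz0]
      · rw [map_mul, Heis.vec_mul, hy0, (convData ℤ _).σ_zero, hyv, hzv]
    | single i s =>
      have h0 : (a hr i).deg = 0 := rfl
      refine ⟨α i ^ s, by rw [map_zpow, hμ], ?_, ?_⟩
      · rw [map_zpow, hφα, Heis.deg_zpow, h0, smul_zero]
      · rw [map_zpow, hφα, vec_zpow_of_deg_eq_zero h0]
        simp [a, Heis.ofVec]
  have hconj : ∀ (k : ℤ) (v : ℤ →₀ ℤ),
      τ ^ k * μ (.ofAdd v) * (τ ^ k)⁻¹ = μ (.ofAdd (shiftBy ℤ k v)) := by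
    intro k v
    induction v using Finsupp.induction_linear with
    | zero => simp
    | add f g hf hg =>
      rw [map_add (shiftBy ℤ k), ofAdd_add, ofAdd_add, map_mul, map_mul, ← hf, ← hg]
      group
    | single i s =>
      rw [shiftBy_single, hμ, hμ, ← conj_zpow]
      congr 1
      simp only [hα, τ, ← map_zpow, ← map_inv, ← map_mul]
      congr 1
      rw [zpow_add]
      group
  have hform : ∀ x : P, ∃ (v : ℤ →₀ ℤ) (k : ℤ), QuotientGroup.mk' C x = μ (.ofAdd v) * τ ^ k := by
    intro x
    have hx : x ∈ Subgroup.closure {T, A} := hgen ▸ Subgroup.mem_top x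
    induction hx using Subgroup.closure_induction with
    | mem x hx =>
      rcases hx with rfl | rfl
      · exact ⟨0, 1, by simp [τ]⟩
      · refine ⟨Finsupp.single 0 1, 0, ?_⟩
        rw [hμ, zpow_one, zpow_zero, mul_one, hα]
        simp
    | one => exact ⟨0, 0, by simp⟩
    | mul x y _ _ hx hy =>
      obtain ⟨v, k, hx⟩ := hx
      obtain ⟨w, l, hy⟩ := hy
      refine ⟨v + shiftBy ℤ k w, k + l, ?_⟩
      rw [map_mul, hx, hy, ofAdd_add, map_mul, ← hconj, zpow_add]
      group
    | inv x _ hx =>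
      obtain ⟨v, k, hx⟩ := hx
      refine ⟨shiftBy ℤ (-k) (-v), -k, ?_⟩
      rw [map_inv, hx, ← hconj, ofAdd_neg, map_inv]
      group
  obtain ⟨v, k, hx⟩ := hform x
  obtain ⟨y, hy, hy0, hyv⟩ := hlift v
  refine ⟨y, k, ?_, hy0, fun h => ?_⟩
  · rw [← QuotientGroup.eq]
    change QuotientGroup.mk' C x = QuotientGroup.mk' C (y * T ^ k)
    rw [hx, map_mul, map_zpow, hy]
  · rw [← QuotientGroup.eq_one_iff]
    change QuotientGroup.mk' C y = 1
    rw [hy, ← hyv, h, ofAdd_zero, map_one]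

/-- The defining relations of `SparseGroup r hr` on the generators `t` and `a 0`. -/
theorem injective_of_relations (hgen : Subgroup.closure {T, A} = ⊤) (φ : P →* SparseGroup r hr)
    (hT : φ T = t hr) (hA : φ A = a hr 0)
    (h₁ : ∀ j : ℕ, shiftComm T A j * T = T * shiftComm T A j)
    (h₂ : ∀ j : ℕ, shiftComm T A j * A = A * shiftComm T A j)
    (h₃ : ∀ v q : ℕ, shiftComm T A ((2 ^ v * (2 * q + 1) : ℕ) : ℤ) =
      shiftComm T A ((2 ^ v : ℕ) : ℤ) ^ chi r v (2 ^ v * (2 * q + 1))) :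
    Function.Injective φ := by
  have hcentral : ∀ (j : ℕ) (x : P), shiftComm T A j * x = x * shiftComm T A j := by
    intro j x
    have hx : x ∈ Subgroup.closure {T, A} := hgen ▸ Subgroup.mem_top x
    have hle : Subgroup.closure {T, A} ≤ Subgroup.centralizer {shiftComm T A j} := by
      rw [Subgroup.closure_le]
      rintro y (rfl | rfl)
      · exact Subgroup.mem_centralizer_singleton_iff.2 (h₁ j).symm
      · exact Subgroup.mem_centralizer_singleton_iff.2 (h₂ j).symm
    exact (Subgroup.mem_centralizer_singleton_iff.1 (hle hx)).symm
  obtain ⟨E, hE⟩ := exists_hom_of_commute (fun v : ℕ => shiftComm T A ((2 ^ v : ℕ) : ℤ))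
    fun i j => hcentral _ _
  have hEc : ∀ z x, E z * x = x * E z := by
    intro z x
    induction z using Multiplicative.rec with | _ z
    induction z using Finsupp.induction_linear with
    | zero => simp
    | add f g hf hg => rw [ofAdd_add, map_mul, mul_assoc, hg, ← mul_assoc, hf, mul_assoc]
    | single i s =>
      rw [hE]
      exact (show Commute _ x from hcentral _ x).zpow_left s
  have hφW : ∀ j, φ (shiftComm T A j) = c hr j := fun j => by
    have h := pcomm_a hr j 0
    have h' := t_zpow_conj_a hr j 0
    rw [sub_zero] at h
    rw [add_zero] at h'
    rw [← h, ← h']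
    simp [shiftComm, pcomm, hT, hA]
  have hφE : ∀ z, φ (E z) = cen hr z := by
    intro z
    induction z using Multiplicative.rec with | _ z
    induction z using Finsupp.induction_linear with
    | zero => simp
    | add f g hf hg => rw [ofAdd_add, map_mul, map_mul, hf, hg, map_mul]
    | single i s =>
      rw [hE, map_zpow, hφW, c, Nat.cast_pow, Nat.cast_ofNat, cvec_two_pow, ← map_zpow,
        ← ofAdd_zsmul, Finsupp.smul_single, smul_eq_mul, mul_one]
  have hnormal : E.range.Normal := ⟨by
    rintro _ ⟨z, rfl⟩ g
    rw [← hEc, mul_inv_cancel_right]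
    exact ⟨z, rfl⟩⟩
  have hW : ∀ j : ℕ, shiftComm T A j ∈ E.range := by
    intro j
    rcases eq_or_ne j 0 with rfl | hj
    · convert E.range.one_mem
      simp [shiftComm, pcomm]
    · obtain ⟨v, b, ⟨q, rfl⟩, rfl⟩ := Nat.exists_eq_two_pow_mul_odd hj
      rw [h₃, ← hE]
      exact ⟨_, rfl⟩
  rw [injective_iff_map_eq_one]
  intro x hx
  obtain ⟨y, k, ⟨z, hz⟩, hy0, hyv⟩ := exists_normal_form hgen hW φ hT hA x
  have h4 := congrArg φ hz
  rw [map_mul, map_inv, hx, inv_one, one_mul, hφE, map_mul, map_zpow, hT, t_zpow] at h4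
  have h5 : k = 0 := by
    have := congrArg Heis.deg h4
    rw [Heis.deg_mul, hy0, zero_add] at this
    exact this.symm
  have h6 : (φ y).vec = 0 := by
    have := congrArg Heis.vec h4
    rw [Heis.vec_mul] at this
    change 0 = (φ y).vec + (convData ℤ (halfVec r hr)).σ _ 0 at this
    rw [map_zero, add_zero] at this
    exact this.symm
  have h7 : x ∈ E.range := by
    rw [h5, zpow_zero, mul_one] at hz
    have h8 := E.range.mul_mem (hyv h6) (E.range.inv_mem ⟨z, hz⟩)
    rwa [mul_inv_rev, inv_inv, ← mul_assoc, mul_inv_cancel, one_mul] at h8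
  obtain ⟨z, rfl⟩ := h7
  rw [hφE] at hx
  rw [Heis.ofCen_injective (hx.trans (map_one (cen hr)).symm), map_one]

end SparseGroup

namespace SparseGroup

/-- The word `[t ^ j a t ^ (-j), a]` in the letters `0 = t`, `1 = a`. -/
def commWord (j : ℕ) : List (Fin 2 × Bool) :=
  List.replicate j (0, true) ++ [(1, false)] ++ List.replicate j (0, false) ++ [(1, false)] ++
    List.replicate j (0, true) ++ [(1, true)] ++ List.replicate j (0, false) ++ [(1, true)]

/-- The inverse of `commWord j`. -/
def commWordInv (j : ℕ) : List (Fin 2 × Bool) :=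
  [(1, false)] ++ List.replicate j (0, true) ++ [(1, false)] ++ List.replicate j (0, false) ++
    [(1, true)] ++ List.replicate j (0, true) ++ [(1, true)] ++ List.replicate j (0, false)

/-- The relation expressing the commutator at distance `2 ^ v * (2 * q + 1)` through the one at
distance `2 ^ v`. -/
def powerWord (r : ℕ → ℕ) (v q : ℕ) : List (Fin 2 × Bool) :=
  commWord (2 ^ v * (2 * q + 1)) ++
    bif 2 * q % 2 ^ r v == 0 then commWordInv (2 ^ v)
    else bif (2 * q + 2) % 2 ^ r v == 0 then commWord (2 ^ v) else []

/-- Enumeration of the relations of `SparseGroup r hr`. -/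
def relWord (r : ℕ → ℕ) (m : ℕ) : List (Fin 2 × Bool) :=
  bif m.unpair.1 == 0 then
    commWord m.unpair.2 ++ [(0, true)] ++ commWordInv m.unpair.2 ++ [(0, false)]
  else bif m.unpair.1 == 1 then
    commWord m.unpair.2 ++ [(1, true)] ++ commWordInv m.unpair.2 ++ [(1, false)]
  else powerWord r (m.unpair.1 - 2) m.unpair.2

section Evaluation

variable {H : Type*} [Group H] (T A : H)

lemma lift_commWord (j : ℕ) :
    FreeGroup.lift ![T, A] (FreeGroup.mk (commWord j)) = shiftComm T A j := by
  rw [FreeGroup.lift_mk, commWord, shiftComm, pcomm]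
  simp [mul_assoc]

lemma lift_commWordInv (j : ℕ) :
    FreeGroup.lift ![T, A] (FreeGroup.mk (commWordInv j)) = (shiftComm T A j)⁻¹ := by
  rw [FreeGroup.lift_mk, commWordInv, shiftComm, pcomm]
  simp [mul_assoc]

lemma lift_append (L L' : List (Fin 2 × Bool)) : FreeGroup.lift ![T, A] (FreeGroup.mk (L ++ L')) =
    FreeGroup.lift ![T, A] (FreeGroup.mk L) * FreeGroup.lift ![T, A] (FreeGroup.mk L') := by
  rw [← FreeGroup.mul_mk, map_mul]

lemma chi_odd_mul (r : ℕ → ℕ) (v q : ℕ) : chi r v (2 ^ v * (2 * q + 1)) =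
    bif 2 * q % 2 ^ r v == 0 then 1 else bif (2 * q + 2) % 2 ^ r v == 0 then -1 else 0 := by
  have h1 : (2 : ℤ) ^ (v + r v) ∣ 2 ^ v * (2 * q + 1) - 2 ^ v ↔ 2 * q % 2 ^ r v = 0 := by
    rw [show (2 : ℤ) ^ v * (2 * q + 1) - 2 ^ v = 2 ^ v * (2 * q) by ring, pow_add,
      mul_dvd_mul_iff_left (by positivity), ← Nat.dvd_iff_mod_eq_zero]
    exact_mod_cast Iff.rfl
  have h2 : (2 : ℤ) ^ (v + r v) ∣ 2 ^ v * (2 * q + 1) + 2 ^ v ↔ (2 * q + 2) % 2 ^ r v = 0 := by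
    rw [show (2 : ℤ) ^ v * (2 * q + 1) + 2 ^ v = 2 ^ v * (2 * q + 2) by ring, pow_add,
      mul_dvd_mul_iff_left (by positivity), ← Nat.dvd_iff_mod_eq_zero]
    exact_mod_cast Iff.rfl
  simp only [chi, h1, h2, Bool.cond_eq_ite, beq_iff_eq]

lemma lift_powerWord (r : ℕ → ℕ) (v q : ℕ) :
    FreeGroup.lift ![T, A] (FreeGroup.mk (powerWord r v q)) =
      shiftComm T A ((2 ^ v * (2 * q + 1) : ℕ) : ℤ) *
        (shiftComm T A ((2 ^ v : ℕ) : ℤ) ^ chi r v (2 ^ v * (2 * q + 1)))⁻¹ := by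
  rw [powerWord, lift_append, lift_commWord, chi_odd_mul]
  congr 1
  rcases (2 * q % 2 ^ r v == 0) with _ | _
  · rcases ((2 * q + 2) % 2 ^ r v == 0) with _ | _
    · simp [FreeGroup.lift_mk]
    · simp only [cond_false, cond_true, lift_commWord, zpow_neg, zpow_one, inv_inv]
  · simp only [cond_true, lift_commWordInv, zpow_one]

lemma lift_relWord_eq_one_iff (r : ℕ → ℕ) :
    (∀ m, FreeGroup.lift ![T, A] (FreeGroup.mk (relWord r m)) = 1) ↔
      (∀ j : ℕ, shiftComm T A j * T = T * shiftComm T A j) ∧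
      (∀ j : ℕ, shiftComm T A j * A = A * shiftComm T A j) ∧
      ∀ v q : ℕ, shiftComm T A ((2 ^ v * (2 * q + 1) : ℕ) : ℤ) =
        shiftComm T A ((2 ^ v : ℕ) : ℤ) ^ chi r v (2 ^ v * (2 * q + 1)) := by
  have e0 : ∀ j, FreeGroup.lift ![T, A] (FreeGroup.mk (relWord r (Nat.pair 0 j))) = 1 ↔
      shiftComm T A j * T = T * shiftComm T A j := fun j => by
    simp only [relWord, Nat.unpair_pair, beq_self_eq_true, cond_true, lift_append, lift_commWord,
      lift_commWordInv]
    rw [← mul_inv_eq_one (b := T * _), mul_inv_rev]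
    simp [FreeGroup.lift_mk, mul_assoc]
  have e1 : ∀ j, FreeGroup.lift ![T, A] (FreeGroup.mk (relWord r (Nat.pair 1 j))) = 1 ↔
      shiftComm T A j * A = A * shiftComm T A j := fun j => by
    simp only [relWord, Nat.unpair_pair, beq_self_eq_true, cond_true, cond_false,
      show ((1 : ℕ) == 0) = false from rfl, lift_append, lift_commWord, lift_commWordInv]
    rw [← mul_inv_eq_one (b := A * _), mul_inv_rev]
    simp [FreeGroup.lift_mk, mul_assoc]
  have e2 : ∀ v q, FreeGroup.lift ![T, A] (FreeGroup.mk (relWord r (Nat.pair (v + 2) q))) = 1 ↔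
      shiftComm T A ((2 ^ v * (2 * q + 1) : ℕ) : ℤ) =
        shiftComm T A ((2 ^ v : ℕ) : ℤ) ^ chi r v (2 ^ v * (2 * q + 1)) := fun v q => by
    have : relWord r (Nat.pair (v + 2) q) = powerWord r v q := by simp [relWord]
    rw [this, lift_powerWord, mul_inv_eq_one]
  constructor
  · exact fun h => ⟨fun j => (e0 j).1 (h _), fun j => (e1 j).1 (h _), fun v q => (e2 v q).1 (h _)⟩
  · rintro ⟨h0, h1, h2⟩ m
    rw [← Nat.pair_unpair m]
    generalize m.unpair.2 = j
    rcases m.unpair.1 with _ | _ | v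
    · exact (e0 j).2 (h0 j)
    · exact (e1 j).2 (h1 j)
    · exact (e2 v j).2 (h2 v j)

end Evaluation

section Computability

lemma primrec_two_pow : Primrec fun n : ℕ => 2 ^ n :=
  (Primrec₂.unpaired'.1 Nat.Primrec.pow).comp (Primrec.const 2) Primrec.id

lemma primrec_replicate {α : Type*} [Primcodable α] (x : α) :
    Primrec fun j : ℕ => List.replicate j x :=
  (Primrec.list_map Primrec.list_range (Primrec₂.const x)).of_eq fun j => by
    simp [List.map_const']

lemma primrec_commWord : Primrec commWord :=
  have h := fun x : Fin 2 × Bool => primrec_replicate x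
  have k := fun x : List (Fin 2 × Bool) => Primrec.const (α := ℕ) x
  have ap {g₁ g₂ : ℕ → List (Fin 2 × Bool)} (h₁ : Primrec g₁) (h₂ : Primrec g₂) :
    Primrec fun j => g₁ j ++ g₂ j := Primrec.list_append.comp h₁ h₂
  ap (ap (ap (ap (ap (ap (ap (h _) (k _)) (h _)) (k _)) (h _)) (k _)) (h _)) (k _)

lemma primrec_commWordInv : Primrec commWordInv :=
  have h := fun x : Fin 2 × Bool => primrec_replicate x
  have k := fun x : List (Fin 2 × Bool) => Primrec.const (α := ℕ) x
  have ap {g₁ g₂ : ℕ → List (Fin 2 × Bool)} (h₁ : Primrec g₁) (h₂ : Primrec g₂) :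
    Primrec fun j => g₁ j ++ g₂ j := Primrec.list_append.comp h₁ h₂
  ap (ap (ap (ap (ap (ap (ap (k _) (h _)) (k _)) (h _)) (k _)) (h _)) (k _)) (h _)

lemma computable_relWord {r : ℕ → ℕ} (hr : Computable r) : Computable (relWord r) := by
  have k := fun n : ℕ => Computable.const (α := ℕ) n
  have kw := fun w : List (Fin 2 × Bool) => Computable.const (α := ℕ) w
  have ap {g₁ g₂ : ℕ → List (Fin 2 × Bool)} (h₁ : Computable g₁) (h₂ : Computable g₂) :
      Computable fun j => g₁ j ++ g₂ j := Primrec.list_append.to_comp.comp h₁ h₂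
  have eq {g₁ g₂ : ℕ → ℕ} (h₁ : Computable g₁) (h₂ : Computable g₂) :
      Computable fun j => g₁ j == g₂ j := Primrec.beq.to_comp.comp h₁ h₂
  have mul {g₁ g₂ : ℕ → ℕ} (h₁ : Computable g₁) (h₂ : Computable g₂) :
      Computable fun j => g₁ j * g₂ j := Primrec.nat_mul.to_comp.comp h₁ h₂
  have plus {g₁ g₂ : ℕ → ℕ} (h₁ : Computable g₁) (h₂ : Computable g₂) :
      Computable fun j => g₁ j + g₂ j := Primrec.nat_add.to_comp.comp h₁ h₂
  have mod {g₁ g₂ : ℕ → ℕ} (h₁ : Computable g₁) (h₂ : Computable g₂) :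
      Computable fun j => g₁ j % g₂ j := Primrec.nat_mod.to_comp.comp h₁ h₂
  have pow {g : ℕ → ℕ} (h : Computable g) : Computable fun j => 2 ^ g j :=
    primrec_two_pow.to_comp.comp h
  have cw {g : ℕ → ℕ} (h : Computable g) : Computable fun j => commWord (g j) :=
    primrec_commWord.to_comp.comp h
  have ci {g : ℕ → ℕ} (h : Computable g) : Computable fun j => commWordInv (g j) :=
    primrec_commWordInv.to_comp.comp h
  have p1 : Computable fun m : ℕ => m.unpair.1 := Computable.fst.comp Computable.unpair
  have p2 : Computable fun m : ℕ => m.unpair.2 := Computable.snd.comp Computable.unpair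
  have pv : Computable fun m : ℕ => m.unpair.1 - 2 := Primrec.nat_sub.to_comp.comp p1 (k 2)
  have q2 := mul (k 2) p2
  have hrv := pow (hr.comp pv)
  exact Computable.cond (eq p1 (k 0)) (ap (ap (ap (cw p2) (kw _)) (ci p2)) (kw _)) <|
    Computable.cond (eq p1 (k 1)) (ap (ap (ap (cw p2) (kw _)) (ci p2)) (kw _)) <|
    ap (cw (mul (pow pv) (plus q2 (k 1)))) <|
    Computable.cond (eq (mod q2 hrv) (k 0)) (ci (pow pv)) <|
    Computable.cond (eq (mod (plus q2 (k 2)) hrv) (k 0)) (cw (pow pv)) (kw [])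

lemma computable_scale {f : ℕ → ℕ} (hf : Computable f) :
    Computable fun u => f (8 * 2 ^ u + 4) + 3 := by
  have k := fun n : ℕ => Computable.const (α := ℕ) n
  exact Primrec.nat_add.to_comp.comp (hf.comp (Primrec.nat_add.to_comp.comp
    (Primrec.nat_mul.to_comp.comp (k 8) primrec_two_pow.to_comp) (k 4))) (k 3)

end Computability

variable {r : ℕ → ℕ} (hr : ∀ u, 3 ≤ r u)

lemma shiftComm_t_a (j : ℤ) : shiftComm (t hr) (a hr 0) j = c hr j := by
  rw [shiftComm, t_zpow_conj_a, pcomm_a, add_zero, sub_zero]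

lemma c_two_pow_mul_odd (v q : ℕ) :
    c hr (2 ^ v * (2 * q + 1)) = c hr (2 ^ v) ^ chi r v (2 ^ v * (2 * q + 1)) := by
  rw [c, c, ← map_zpow, ← ofAdd_zsmul, cvec_two_pow, Finsupp.smul_single, smul_eq_mul, mul_one,
    cvec_eq_single hr (dvd_mul_right _ _)]
  rw [pow_succ, mul_dvd_mul_iff_left (by positivity)]
  omega

lemma lift_relWord_eq_one (m : ℕ) :
    FreeGroup.lift ![t hr, a hr 0] (FreeGroup.mk (relWord r m)) = 1 := by
  refine (lift_relWord_eq_one_iff _ _ r).2 ⟨fun j => ?_, fun j => ?_, fun v q => ?_⟩ m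
  · rw [shiftComm_t_a, c_comm]
  · rw [shiftComm_t_a, c_comm]
  · rw [shiftComm_t_a, shiftComm_t_a]
    exact_mod_cast c_two_pow_mul_odd hr v q

lemma recursivelyPresented (hc : Computable r) : RecursivelyPresented (SparseGroup r hr) := by
  refine ⟨2, relWord r, computable_relWord hc, ⟨?_⟩⟩
  set R : Set (FreeGroup (Fin 2)) := Set.range fun m => FreeGroup.mk (relWord r m)
  let φ : PresentedGroup R →* SparseGroup r hr :=
    PresentedGroup.toGroup (f := ![t hr, a hr 0]) (by
      rintro _ ⟨m, rfl⟩
      exact lift_relWord_eq_one hr m)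
  set T : PresentedGroup R := PresentedGroup.of 0
  set A : PresentedGroup R := PresentedGroup.of 1
  have hT : φ T = t hr := PresentedGroup.toGroup.of _
  have hA : φ A = a hr 0 := PresentedGroup.toGroup.of _
  have hmk : PresentedGroup.mk R = FreeGroup.lift ![T, A] := by
    ext i
    fin_cases i <;> simp [T, A, PresentedGroup.of]
  have hgen : Subgroup.closure {T, A} = ⊤ := by
    rw [← PresentedGroup.closure_range_of R]
    congr 1
    ext x
    simp [Fin.exists_fin_two, T, A, eq_comm]
  obtain ⟨h₁, h₂, h₃⟩ := (lift_relWord_eq_one_iff T A r).1 fun m => by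
    rw [← hmk]
    exact PresentedGroup.one_of_mem ⟨m, rfl⟩
  refine (MulEquiv.ofBijective φ ⟨injective_of_relations hgen φ hT hA h₁ h₂ h₃, ?_⟩).symm
  rw [← MonoidHom.range_eq_top, eq_top_iff, ← closure_eq_top hr, Subgroup.closure_le]
  rintro x (rfl | rfl)
  exacts [⟨T, hT⟩, ⟨A, hA⟩]

end SparseGroup

/-- For every increasing `f : ℕ → ℕ` there is a finitely generated,
torsion-free, `3`-step solvable, conjugacy separable quotient `G` of Hall's group with
`rf_G(n) ≥ f(n)` for all large `n`; if `f` is computable, `G` can be taken recursively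
presented. -/
theorem stmt_11 (f : ℕ → ℕ) (hf : Monotone f) :
    ∃ (G : Type) (instG : Group G),
      @GoodGroup f G instG ∧ (Computable f → @RecursivelyPresented G instG) :=
  have hr : ∀ u, 3 ≤ (fun u => f (8 * 2 ^ u + 4) + 3) u := fun _ => Nat.le_add_left _ _
  ⟨SparseGroup _ hr, inferInstance, SparseGroup.goodGroup hr hf fun _ => rfl, fun hc =>
    SparseGroup.recursivelyPresented hr (SparseGroup.computable_scale hc)⟩
end

section
/- Fix ε > 0. Let n > 0, let −n ≤ l₁ < ⋯ < l_k ≤ n and m₀ be integers with l_i ≢ l_j (mod m₀) for i ≠ j, and let f ∈ ℤ[X, X⁻¹] be a Laurent polynomial supported in degrees [−n, n] with f ∉ M = ℤX^{l₁} + ⋯ + ℤX^{l_k}. Then there exists an odd prime q < c·n^{1/2+ε} such that f ∉ M + I_q, where I_q = ⟨X^{lcm(q,m₀)} − 1⟩ ⊆ ℤ[X, X⁻¹]. -/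
open LaurentPolynomial

/-- Folding the exponents of a Laurent polynomial modulo `m`. -/
noncomputable def foldMod (m : ℕ) : LaurentPolynomial ℤ →ₐ[ℤ] AddMonoidAlgebra ℤ (ZMod m) :=
  AddMonoidAlgebra.mapDomainAlgHom ℤ ℤ (Int.castAddHom (ZMod m))

theorem foldMod_T (m : ℕ) (a : ℤ) : foldMod m (T a) = AddMonoidAlgebra.single (a : ZMod m) 1 := by
  exact AddMonoidAlgebra.mapDomain_single

/-- The endomorphism that replaces `f` by `∑ i, aᵢ T (l i)`, where `aᵢ` is the sum of the
coefficients of `f` at exponents congruent to `l i` modulo `m`. -/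
noncomputable def collapse {k : ℕ} (m : ℕ) (l : Fin k → ℤ) :
    LaurentPolynomial ℤ →ₗ[ℤ] LaurentPolynomial ℤ where
  toFun f := ∑ i, (foldMod m f).coeff (l i : ZMod m) • T (l i)
  map_add' f g := by simp [add_smul, Finset.sum_add_distrib]
  map_smul' a f := by
    simp only [map_smul, AddMonoidAlgebra.coeff_smul, Finsupp.smul_apply, smul_assoc,
      Finset.smul_sum, RingHom.id_apply]

theorem collapse_apply {k : ℕ} (m : ℕ) (l : Fin k → ℤ) (f : LaurentPolynomial ℤ) :
    collapse m l f = ∑ i, (foldMod m f).coeff (l i : ZMod m) • T (l i) := rfl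

theorem collapse_mem_span {k : ℕ} (m : ℕ) (l : Fin k → ℤ) (f : LaurentPolynomial ℤ) :
    collapse m l f ∈ Submodule.span ℤ (Set.range fun i => (T (l i) : LaurentPolynomial ℤ)) := by
  rw [collapse_apply]
  exact Submodule.sum_mem _ fun i _ =>
    Submodule.smul_mem _ _ (Submodule.subset_span (Set.mem_range_self i))

theorem collapse_T {k : ℕ} {m : ℕ} {l : Fin k → ℤ}
    (hl : Function.Injective fun i => (l i : ZMod m)) (j : Fin k) :
    collapse m l (T (l j)) = T (l j) := by
  rw [collapse_apply, Finset.sum_eq_single j]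
  · simp [foldMod_T]
  · intro i _ hij
    have : (l j : ZMod m) ≠ l i := fun h => hij (hl h.symm)
    simp [foldMod_T, this]
  · simp

theorem collapse_eq_self {k : ℕ} {m : ℕ} {l : Fin k → ℤ}
    (hl : Function.Injective fun i => (l i : ZMod m)) {f : LaurentPolynomial ℤ}
    (hf : f ∈ Submodule.span ℤ (Set.range fun i => (T (l i) : LaurentPolynomial ℤ))) :
    collapse m l f = f := by
  have : Set.EqOn (collapse m l) (LinearMap.id (R := ℤ))
      (Set.range fun i => (T (l i) : LaurentPolynomial ℤ)) := by
    rintro _ ⟨j, rfl⟩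
    exact collapse_T hl j
  exact LinearMap.eqOn_span this hf

theorem collapse_eq_zero {k : ℕ} {m N : ℕ} (hN : m ∣ N) (l : Fin k → ℤ) {f : LaurentPolynomial ℤ}
    (hf : f ∈ Ideal.span {(T N : LaurentPolynomial ℤ) - 1}) :
    collapse m l f = 0 := by
  obtain ⟨h, rfl⟩ := Ideal.mem_span_singleton'.1 hf
  have : foldMod m (T N - 1) = 0 := by
    have h0 : ((N : ℤ) : ZMod m) = 0 := by
      rw [Int.cast_natCast]; exact (ZMod.natCast_eq_zero_iff N m).2 hN
    rw [map_sub, map_one, foldMod_T, h0, AddMonoidAlgebra.one_def, sub_self]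
  simp [collapse_apply, this]

/-- If `f` lies in the span of the `T (l i)` up to a multiple of `T N - 1`, then that multiple
is `f - collapse m l f`, for every divisor `m` of `N` modulo which the `l i` are distinct. -/
theorem sub_collapse_mem {k : ℕ} {m N : ℕ} (hN : m ∣ N) {l : Fin k → ℤ}
    (hl : Function.Injective fun i => (l i : ZMod m)) {f : LaurentPolynomial ℤ}
    (hf : f ∈ Submodule.span ℤ (Set.range fun i => (T (l i) : LaurentPolynomial ℤ)) ⊔
      (Ideal.span {(T N : LaurentPolynomial ℤ) - 1}).restrictScalars ℤ) :
    f - collapse m l f ∈ Ideal.span {(T N : LaurentPolynomial ℤ) - 1} := by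
  obtain ⟨g, hg, h, hh, rfl⟩ := Submodule.mem_sup.1 hf
  rw [Submodule.restrictScalars_mem] at hh
  rw [map_add, collapse_eq_self hl hg, collapse_eq_zero hN l hh]
  simpa using hh

/-- The Laurent polynomials supported in degrees `[-n, n]`. -/
noncomputable def supportedIcc (n : ℕ) : Submodule ℤ (LaurentPolynomial ℤ) :=
  Submodule.span ℤ (Set.image T (Set.Icc (-(n : ℤ)) n))

theorem exists_toLaurent_eq_of_mem_supportedIcc {n : ℕ} {g : LaurentPolynomial ℤ}
    (hg : g ∈ supportedIcc n) :
    ∃ p : Polynomial ℤ, p.natDegree ≤ 2 * n ∧ Polynomial.toLaurent p = T n * g := by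
  induction hg using Submodule.span_induction with
  | mem x hx =>
    obtain ⟨i, ⟨h1, h2⟩, rfl⟩ := hx
    refine ⟨Polynomial.X ^ (n + i).toNat, ?_, ?_⟩
    · rw [Polynomial.natDegree_X_pow]; omega
    · rw [Polynomial.toLaurent_X_pow, ← T_add, Int.toNat_of_nonneg (by omega)]
  | zero => exact ⟨0, by simp, by simp⟩
  | add x y _ _ hx hy =>
    obtain ⟨p, hp, hp'⟩ := hx
    obtain ⟨r, hr, hr'⟩ := hy
    exact ⟨p + r, Polynomial.natDegree_add_le_of_degree_le hp hr,
      by rw [map_add, hp', hr', mul_add]⟩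
  | smul a x _ hx =>
    obtain ⟨p, hp, hp'⟩ := hx
    refine ⟨Polynomial.C a * p, (Polynomial.natDegree_C_mul_le _ _).trans hp, ?_⟩
    rw [Polynomial.toLaurent_C_mul_eq, hp', smul_eq_C_mul, mul_left_comm]

theorem cyclotomic_dvd_of_toLaurent_mem {q N : ℕ} (hq : 0 < q) (hN : q ∣ N) {p : Polynomial ℤ}
    (hp : Polynomial.toLaurent p ∈ Ideal.span {(T N : LaurentPolynomial ℤ) - 1}) :
    Polynomial.cyclotomic q ℤ ∣ p := by
  obtain ⟨h, hh⟩ := Ideal.mem_span_singleton'.1 hp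
  have hζ := Complex.isPrimitiveRoot_exp q hq.ne'
  set ζ := Complex.exp (2 * Real.pi * Complex.I / q)
  rw [Polynomial.cyclotomic_eq_minpoly hζ hq]
  refine minpoly.isIntegrallyClosed_dvd (hζ.isIntegral hq) ?_
  obtain ⟨u, hu⟩ := hζ.isUnit hq.ne'
  have := congrArg (eval₂ (algebraMap ℤ ℂ) u) hh
  rw [eval₂_toLaurent, map_mul, map_sub, map_one, eval₂_T_n, hu,
    (hζ.pow_eq_one_iff_dvd N).2 hN, sub_self, mul_zero] at this
  rw [Polynomial.aeval_def, ← this]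

theorem eq_zero_of_cyclotomic_dvd {P : Finset ℕ} {p : Polynomial ℤ}
    (hdvd : ∀ q ∈ P, Polynomial.cyclotomic q ℤ ∣ p)
    (hdeg : p.natDegree < ∑ q ∈ P, q.totient) : p = 0 := by
  have hinj : Function.Injective (Int.castRingHom ℚ) := Int.cast_injective
  rw [← Polynomial.map_eq_zero_iff hinj]
  refine Polynomial.eq_zero_of_dvd_of_natDegree_lt
    (p := ∏ q ∈ P, Polynomial.cyclotomic q ℚ) (Finset.prod_dvd_of_coprime ?_ ?_) ?_
  · exact fun a _ b _ hab => Polynomial.cyclotomic.isCoprime_rat hab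
  · intro q hq
    rw [← Polynomial.map_cyclotomic_int]
    exact Polynomial.map_dvd _ (hdvd q hq)
  · rw [Polynomial.natDegree_map_eq_of_injective hinj,
      Polynomial.natDegree_prod_of_monic _ _ fun q _ => Polynomial.cyclotomic.monic q ℚ]
    simpa [Polynomial.natDegree_cyclotomic] using hdeg

theorem eq_zero_of_mem_supportedIcc {n : ℕ} {P : Finset ℕ} {N : ℕ → ℕ} {g : LaurentPolynomial ℤ}
    (hg : g ∈ supportedIcc n) (hpos : ∀ q ∈ P, 0 < q) (hN : ∀ q ∈ P, q ∣ N q)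
    (hI : ∀ q ∈ P, g ∈ Ideal.span {(T (N q) : LaurentPolynomial ℤ) - 1})
    (hsum : 2 * n < ∑ q ∈ P, q.totient) : g = 0 := by
  obtain ⟨p, hp, hpg⟩ := exists_toLaurent_eq_of_mem_supportedIcc hg
  have : p = 0 := eq_zero_of_cyclotomic_dvd (P := P) (fun q hq =>
    cyclotomic_dvd_of_toLaurent_mem (hpos q hq) (hN q hq)
      (hpg ▸ Ideal.mul_mem_left _ _ (hI q hq))) (hp.trans_lt hsum)
  rw [this, map_zero] at hpg
  exact (isUnit_T (n : ℤ)).mul_right_eq_zero.1 hpg.symm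

open Filter Asymptotics in
theorem eventually_rpow_le_primeCounting {b : ℝ} (hb : b < 1) (hb0 : 0 < b) :
    ∀ᶠ x : ℝ in atTop, 3 * x ^ b + 5 ≤ (Nat.primeCounting ⌊x⌋₊ : ℝ) := by
  have hlog : (fun x : ℝ => x ^ b * Real.log x) =o[atTop] fun x : ℝ => x := by
    refine ((isBigO_refl (fun x : ℝ => x ^ b) atTop).mul_isLittleO
      (isLittleO_log_rpow_atTop (sub_pos.2 hb))).congr' .rfl ?_
    filter_upwards [eventually_gt_atTop 0] with x hx
    rw [← Real.rpow_add hx, add_sub_cancel, Real.rpow_one]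
  filter_upwards [hlog.bound (show (0 : ℝ) < 1 / 100 by norm_num), eventually_ge_atTop 100]
    with x hx hx2
  refine le_trans ?_ (Chebyshev.pi_ge' (by linarith))
  have hl : 0 < Real.log x := Real.log_pos (by linarith)
  have hxb : 1 ≤ x ^ b := Real.one_le_rpow (by linarith) hb0.le
  rw [Real.norm_of_nonneg (by positivity), Real.norm_of_nonneg (by linarith)] at hx
  have hlog2 : Real.log (x + 2) ≤ 2 * Real.log x := by
    rw [← Real.log_rpow (by linarith)]
    exact Real.log_le_log (by linarith) (by norm_num; nlinarith)
  have := Real.log_two_gt_d9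
  rw [le_div_iff₀ hl]
  nlinarith [mul_le_mul_of_nonneg_right hxb hl.le]

theorem card_mul_pred_card_le_sum_totient {P : Finset ℕ} (hP : ∀ q ∈ P, q.Prime) :
    P.card * (P.card - 1) ≤ 2 * ∑ q ∈ P, q.totient := by
  have hinj : Set.InjOn (fun q : ℕ => (q : ℤ) - 1) P := fun a _ b _ h => by simpa using h
  have h := Finset.sum_range_le_sum (s := P.image fun q : ℕ => (q : ℤ) - 1) (c := 0) (by
    simp only [Finset.mem_image]
    rintro _ ⟨q, hq, rfl⟩
    have := (hP q hq).pos
    omega)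
  rw [Finset.card_image_of_injOn hinj, Finset.sum_image hinj] at h
  have htot : ∑ q ∈ P, ((q : ℤ) - 1) = ((∑ q ∈ P, q.totient : ℕ) : ℤ) := by
    rw [Nat.cast_sum]
    refine Finset.sum_congr rfl fun q hq => ?_
    rw [Nat.totient_prime (hP q hq), Nat.cast_sub (hP q hq).one_le, Nat.cast_one]
  simp only [zero_add, htot] at h
  have hcast : ((∑ i ∈ Finset.range P.card, i : ℕ) : ℤ) ≤ (∑ q ∈ P, q.totient : ℕ) := by
    rw [Nat.cast_sum]
    exact h
  rw [← Finset.sum_range_id_mul_two, mul_comm]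
  exact Nat.mul_le_mul_left 2 (Nat.cast_le.1 hcast)

/-- Odd primes below a constant multiple of `n ^ (1/2 + ε)` have totients summing past `2 * n`. -/
theorem exists_odd_primes_sum_totient_gt {ε : ℝ} (hε : 0 < ε) :
    ∃ c : ℝ, 0 < c ∧ ∀ n : ℕ, 0 < n → ∃ P : Finset ℕ,
      (∀ q ∈ P, q.Prime ∧ Odd q ∧ (q : ℝ) < c * (n : ℝ) ^ ((1 : ℝ) / 2 + ε)) ∧
      2 * n < ∑ q ∈ P, q.totient := by
  set a : ℝ := 1 / 2 + ε with ha
  have ha0 : 0 < a := by positivity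
  obtain ⟨Q, hQ⟩ := Filter.eventually_atTop.1
    (eventually_rpow_le_primeCounting (b := 1 / (2 * a))
      (by rw [div_lt_one (by positivity)]; linarith) (by positivity))
  refine ⟨|Q| + 2, by positivity, fun n hn => ?_⟩
  have hn1 : (1 : ℝ) ≤ n := by exact_mod_cast hn
  have hna : 1 ≤ (n : ℝ) ^ a := Real.one_le_rpow hn1 ha0.le
  set x : ℝ := (|Q| + 1) * (n : ℝ) ^ a with hx
  have hx0 : 0 < x := by positivity
  have hQx : Q ≤ x := by nlinarith [le_abs_self Q, abs_nonneg Q]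
  have hnx : (n : ℝ) ^ a ≤ x := by nlinarith [abs_nonneg Q]
  have hpi := hQ x hQx
  have hsq : (n : ℝ) ≤ (x ^ (1 / (2 * a))) ^ 2 := by
    rw [← Real.rpow_natCast, ← Real.rpow_mul hx0.le]
    calc (n : ℝ) = ((n : ℝ) ^ a) ^ (1 / (2 * a) * (2 : ℕ)) := by
          rw [← Real.rpow_mul (by positivity)]
          rw [show a * (1 / (2 * a) * (2 : ℕ)) = 1 by push_cast; field_simp, Real.rpow_one]
      _ ≤ _ := by gcongr
  refine ⟨(Nat.primesLE ⌊x⌋₊).erase 2, fun q hq => ?_, ?_⟩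
  · obtain ⟨hq2, hq⟩ := Finset.mem_erase.1 hq
    obtain ⟨hqx, hqp⟩ := Nat.mem_primesLE.1 hq
    refine ⟨hqp, hqp.odd_of_ne_two hq2, ?_⟩
    have : (q : ℝ) ≤ x := (Nat.le_floor_iff hx0.le).1 hqx
    nlinarith
  · have hsum := card_mul_pred_card_le_sum_totient (P := (Nat.primesLE ⌊x⌋₊).erase 2)
      fun q hq => Nat.prime_of_mem_primesLE (Finset.mem_of_mem_erase hq)
    have hcard := Finset.pred_card_le_card_erase (s := Nat.primesLE ⌊x⌋₊) (a := 2)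
    rw [Nat.primesLE_card_eq_primeCounting] at hcard
    set K := ((Nat.primesLE ⌊x⌋₊).erase 2).card
    have hpiK : (Nat.primeCounting ⌊x⌋₊ : ℝ) ≤ K + 1 := by exact_mod_cast (by omega)
    have hy : 0 < x ^ (1 / (2 * a)) := by positivity
    set y := x ^ (1 / (2 * a))
    have hK : 1 ≤ K := by
      have : (1 : ℝ) ≤ K := by linarith
      exact_mod_cast this
    have hsum' : (K : ℝ) * (K - 1) ≤
        2 * ((∑ q ∈ (Nat.primesLE ⌊x⌋₊).erase 2, q.totient : ℕ) : ℝ) := by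
      have : ((K * (K - 1) : ℕ) : ℝ) ≤ _ := Nat.cast_le.2 hsum
      rw [Nat.cast_mul, Nat.cast_sub hK] at this
      simpa only [Nat.cast_mul, Nat.cast_one, Nat.cast_ofNat] using this
    have : (2 * n : ℝ) < ((∑ q ∈ (Nat.primesLE ⌊x⌋₊).erase 2, q.totient : ℕ) : ℝ) := by
      nlinarith
    exact_mod_cast this

/-- Laurent-polynomial version of Statement 18: fix `ε > 0`; there is
`c > 0` such that for `n > 0`, exponents `-n ≤ l₁ < ⋯ < l_k ≤ n` pairwise distinct
mod `m₀`, and a Laurent polynomial `f` supported in degrees `[-n, n]` with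
`f ∉ M = ℤX^{l₁} + ⋯ + ℤX^{l_k}`, there is an odd prime `q < c·n^{1/2+ε}` with
`f ∉ M + ⟨X^{lcm(q,m₀)} - 1⟩` in `ℤ[X, X⁻¹]`. -/
theorem stmt_19 (ε : ℝ) (hε : 0 < ε) :
    ∃ c : ℝ, 0 < c ∧ ∀ n : ℕ, 0 < n → ∀ (k : ℕ) (l : Fin k → ℤ),
      StrictMono l → (∀ i, -(n : ℤ) ≤ l i ∧ l i ≤ (n : ℤ)) → ∀ m₀ : ℤ,
      (∀ i j, i ≠ j → ¬ (l i ≡ l j [ZMOD m₀])) →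
      ∀ γ : ℤ → ℤ,
      (∑ i ∈ Finset.Icc (-(n : ℤ)) (n : ℤ), LaurentPolynomial.C (γ i) * T i) ∉
        Submodule.span ℤ (Set.range fun i => (T (l i) : LaurentPolynomial ℤ)) →
      ∃ q : ℕ, q.Prime ∧ Odd q ∧ (q : ℝ) < c * (n : ℝ) ^ ((1 : ℝ) / 2 + ε) ∧
        (∑ i ∈ Finset.Icc (-(n : ℤ)) (n : ℤ), LaurentPolynomial.C (γ i) * T i) ∉
          Submodule.span ℤ (Set.range fun i => (T (l i) : LaurentPolynomial ℤ)) ⊔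
            (Ideal.span {(T (Int.lcm (q : ℤ) m₀ : ℕ) : LaurentPolynomial ℤ) - 1}).restrictScalars ℤ := by
  obtain ⟨c, hc, hP⟩ := exists_odd_primes_sum_totient_gt hε
  refine ⟨c, hc, fun n hn k l _ hl m₀ hmod γ hf => ?_⟩
  obtain ⟨P, hP, hsum⟩ := hP n hn
  by_contra! hmem
  set f : LaurentPolynomial ℤ := ∑ i ∈ Finset.Icc (-(n : ℤ)) (n : ℤ), C (γ i) * T i with hfdef
  have hinj : Function.Injective fun i => (l i : ZMod m₀.natAbs) := by
    intro i j hij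
    by_contra hne
    refine hmod i j hne ?_
    rw [Int.modEq_iff_dvd, ← Int.natAbs_dvd, ← Int.modEq_iff_dvd]
    exact (ZMod.intCast_eq_intCast_iff _ _ _).1 hij
  have hfsupp : f ∈ supportedIcc n := Submodule.sum_mem _ fun i hi => by
    rw [← smul_eq_C_mul]
    exact Submodule.smul_mem _ _ (Submodule.subset_span ⟨i, Finset.mem_Icc.1 hi, rfl⟩)
  have hspan : Submodule.span ℤ (Set.range fun i => (T (l i) : LaurentPolynomial ℤ)) ≤
      supportedIcc n := Submodule.span_mono (by rintro _ ⟨i, rfl⟩; exact ⟨l i, hl i, rfl⟩)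
  have hcol := collapse_mem_span m₀.natAbs l f
  have hzero : f - collapse m₀.natAbs l f = 0 :=
    eq_zero_of_mem_supportedIcc (P := P) (N := fun q => Int.lcm (q : ℤ) m₀)
      (Submodule.sub_mem _ hfsupp (hspan hcol)) (fun q hq => (hP q hq).1.pos)
      (fun q _ => Int.natCast_dvd_natCast.1 (Int.dvd_lcm_left _ _))
      (fun q hq => sub_collapse_mem (Int.natAbs_dvd_natAbs.2 (Int.dvd_lcm_right _ _)) hinj
        (hmem q (hP q hq).1 (hP q hq).2.1 (hP q hq).2.2)) hsum
  exact hf (sub_eq_zero.1 hzero ▸ hcol)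
end
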